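/- arXiv:math/0211380 — 2 statements merged into one kernel-verified Lean document; each statement's English description precedes it below -/
import Mathlib

section
/- The number of permutations of [n] containing exactly two occurrences of the pattern 321 such that the two occurrences have distinct middle positions is C^{(8)}_{n−4} + C^{(11)}_{n−6}, with the convention C^{(k)}_m = 0 for m < 0. -/
/-!
Let `C` be the Catalan series, `C = 1 + X * C ^ 2`, so that the ballot numbers `C^{(k)}_n` are the
coefficients of `C ^ k`. The count rests on a splitting of permutations in the style of Burstein.

Suppose the position `k` is the middle of exactly one occurrence `c b a` of 321 in `π`. Then `c` is
the only letter left of `b` exceeding `b`, and `a` the only letter right of `b` below `b`; hence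
`b = k` is a fixed point and `π = π₁ c π₂ b π₃ a π₄`. Put `α = π₁ b π₂ a`, a permutation of `[0, k]`
not fixing `k`, and `β = c π₃ b π₄`, a permutation of `[k, n)` not fixing `k`. This is a bijection
(`glue_glued`, `glue_injective`, `exists_glue`, combined in `ncard_piece`), and it matches the
occurrences of `π` with middle to the left (right) of `k` with those of `α` (of `β`):
`Glued.left`, `Glued.right`.

* 321-avoiding permutations are counted by `C` (`ncard_avoid`). This is refined by the length of an
  initial increasing stretch of positions; removing the minimum turns the refined numbers into
  ballot numbers (`ncard_incAvoid_diff`). The avoiders that do not fix the last (or first) point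
  have the series `C - 1 - X * C = X ^ 2 * C ^ 3`.
* One occurrence: both `α` and `β` avoid 321. They share the letter `k`, so the series is
  `(X ^ 2 * C ^ 3) ^ 2 / X = X ^ 3 * C ^ 6` (`ncard_oneOcc`).
* Two occurrences with distinct middles: split at the left middle, so that `α` avoids 321 and `β`
  has one occurrence. The series is `X ^ 2 * C ^ 3 * (1 - X) * X ^ 3 * C ^ 6 / X`, that is
  `X ^ 4 * (1 - X) * C ^ 9 = X ^ 4 * C ^ 8 + X ^ 6 * C ^ 11` (`ncard_twoOcc`).

Everything takes place in permutations of `ℤ` supported on an interval: passing to subintervals,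
multiplying `α` and `β`, and translating then need no casts between types `Fin n`.
-/


/-- The ballot number `C^{(k)}_n = C(2n+k-1, n) - C(2n+k-1, n-1)`, with `C(a,-1) = 0`. -/
def ballot (k n : ℕ) : ℕ :=
  Nat.choose (2 * n + k - 1) n - (if n = 0 then 0 else Nat.choose (2 * n + k - 1) (n - 1))

/-- The ballot number with an integer subscript: `C^{(k)}_m = 0` for `m < 0`. -/
def ballotZ (k : ℕ) (m : ℤ) : ℕ := if 0 ≤ m then ballot k m.toNat else 0

/-- An occurrence of the pattern 321 in a permutation of `{0,…,n-1}`: a triple of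
positions `i < j < k` (here `t = (i, j, k)`) with `π i > π j > π k`. -/
def IsOcc321 {n : ℕ} (π : Equiv.Perm (Fin n)) (t : Fin n × Fin n × Fin n) : Prop :=
  t.1 < t.2.1 ∧ t.2.1 < t.2.2 ∧ π t.2.2 < π t.2.1 ∧ π t.2.1 < π t.1

/-- The number of occurrences of the pattern 321 in a permutation. -/
noncomputable def occ321Count (n : ℕ) (π : Equiv.Perm (Fin n)) : ℕ :=
  Nat.card {t : Fin n × Fin n × Fin n // IsOcc321 π t}

/-! ### Ballot numbers -/

theorem ballot_zero_right (k : ℕ) : ballot k 0 = 1 := by simp [ballot]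

theorem ballot_succ_cast (k n : ℕ) : (ballot k (n + 1) : ℤ) =
    (2 * n + k + 1).choose (n + 1) - (2 * n + k + 1).choose n := by
  have h1 : 2 * (n + 1) + k - 1 = 2 * n + k + 1 := by omega
  have h2 : (2 * n + k + 1).choose n ≤ (2 * n + k + 1).choose (n + 1) := by
    rcases Nat.eq_zero_or_pos k with rfl | hk
    · exact (Nat.choose_symm_half n).ge
    · exact Nat.choose_le_succ_of_lt_half_left (by omega)
  simp [ballot, h1, Nat.cast_sub h2]

theorem ballot_zero_left (n : ℕ) : ballot 0 (n + 1) = 0 := by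
  have h := ballot_succ_cast 0 n
  have h2 := Nat.choose_symm_half n
  simp only [add_zero, h2, sub_self] at h
  exact_mod_cast h

theorem ballot_rec (k n : ℕ) :
    ballot (k + 1) (n + 1) = ballot k (n + 1) + ballot (k + 2) n := by
  zify
  rw [ballot_succ_cast, ballot_succ_cast]
  rcases n with _ | n
  · simp [ballot_zero_right]
  · rw [ballot_succ_cast,
      show 2 * (n + 1) + (k + 1) + 1 = (2 * n + k + 3) + 1 by ring,
      show 2 * (n + 1) + k + 1 = 2 * n + k + 3 by ring,
      show 2 * n + (k + 2) + 1 = 2 * n + k + 3 by ring,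
      Nat.choose_succ_succ' (2 * n + k + 3) (n + 1), Nat.choose_succ_succ' (2 * n + k + 3) n]
    push_cast
    ring

/-- The generating function of the ballot numbers `C^{(k)}_n`, in the variable counting `n`. -/
noncomputable def ballotSeries (k : ℕ) : PowerSeries ℤ := PowerSeries.mk fun n => (ballot k n : ℤ)

theorem ballotSeries_zero : ballotSeries 0 = 1 := by
  ext n
  rcases n with _ | n
  · simp [ballotSeries, ballot_zero_right]
  · simp [ballotSeries, ballot_zero_left, PowerSeries.coeff_one]

theorem ballotSeries_succ (k : ℕ) :
    ballotSeries (k + 1) = ballotSeries k + PowerSeries.X * ballotSeries (k + 2) := by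
  ext n
  rcases n with _ | n
  · simp [ballotSeries, ballot_zero_right]
  · simp [ballotSeries, ballot_rec, PowerSeries.coeff_succ_X_mul]

/-- A sequence of power series with `F (k + 1) = F k + X * F (k + 2)` is determined by `F 0`:
the recursion computes the coefficient of `X ^ n` in `F k` by induction on `n`, then `k`. -/
theorem eq_of_ballot_rec (F G : ℕ → PowerSeries ℤ) (h0 : F 0 = G 0)
    (hF : ∀ k, F (k + 1) = F k + PowerSeries.X * F (k + 2))
    (hG : ∀ k, G (k + 1) = G k + PowerSeries.X * G (k + 2)) (k : ℕ) : F k = G k := by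
  ext n
  induction n generalizing k with
  | zero =>
    induction k with
    | zero => rw [h0]
    | succ k ih => rw [hF, hG]; simpa using ih
  | succ n ihn =>
    induction k with
    | zero => rw [h0]
    | succ k ih =>
      rw [hF, hG, map_add, map_add, ih, PowerSeries.coeff_succ_X_mul,
        PowerSeries.coeff_succ_X_mul, ihn]

theorem ballotSeries_mul (k l : ℕ) : ballotSeries k * ballotSeries l = ballotSeries (k + l) := by
  refine eq_of_ballot_rec (fun k => ballotSeries k * ballotSeries l)
    (fun k => ballotSeries (k + l)) ?_ ?_ ?_ k
  · simp [ballotSeries_zero]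
  · intro k
    simp only [ballotSeries_succ k]
    ring
  · intro k
    simp only [show k + 1 + l = (k + l) + 1 by ring, show k + 2 + l = (k + l) + 2 by ring,
      ballotSeries_succ (k + l)]


/-! ### Permutations of integer intervals -/

open Equiv (Perm)

/-- The permutations of `ℤ` fixing everything outside `[a, b)`: this is the model of the symmetric
group on the interval `[a, b)` used throughout, so that sub- and translated intervals need no
casts. -/
def permIco (a b : ℤ) : Set (Perm ℤ) := {σ | ∀ i, ¬(a ≤ i ∧ i < b) → σ i = i}

/-- `j` is the middle position of some occurrence of 321. -/
def HasMid (σ : Perm ℤ) (j : ℤ) : Prop := (∃ i, i < j ∧ σ j < σ i) ∧ (∃ l, j < l ∧ σ l < σ j)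

/-- `j` is the middle position of exactly one occurrence of 321. -/
def UniqMid (σ : Perm ℤ) (j : ℤ) : Prop := (∃! i, i < j ∧ σ j < σ i) ∧ (∃! l, j < l ∧ σ l < σ j)

theorem UniqMid.hasMid {σ : Perm ℤ} {j : ℤ} (h : UniqMid σ j) : HasMid σ j :=
  ⟨h.1.exists, h.2.exists⟩

/-- The 321-avoiding permutations of `[a, b)`. -/
def avoid (a b : ℤ) : Set (Perm ℤ) := {σ ∈ permIco a b | ∀ j, ¬HasMid σ j}

/-- The permutations of `[a, b)` with exactly one occurrence of 321. -/
def oneOcc (a b : ℤ) : Set (Perm ℤ) :=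
  {σ ∈ permIco a b | ∃ k, UniqMid σ k ∧ ∀ j, j ≠ k → ¬HasMid σ j}

/-- The permutations of `[a, b)` with exactly two occurrences of 321, at distinct middles. -/
def twoOcc (a b : ℤ) : Set (Perm ℤ) :=
  {σ ∈ permIco a b | ∃ k k', k < k' ∧ UniqMid σ k ∧ UniqMid σ k' ∧
    ∀ j, j ≠ k → j ≠ k' → ¬HasMid σ j}

theorem permIco_finite (a b : ℤ) : (permIco a b).Finite := by
  have : Finite {i : ℤ // a ≤ i ∧ i < b} := (Set.finite_Ico a b).to_subtype
  have h : Finite {f : Perm ℤ // ∀ i, ¬(a ≤ i ∧ i < b) → f i = i} :=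
    Finite.of_equiv _ (Perm.subtypeEquivSubtypePerm fun i : ℤ => a ≤ i ∧ i < b)
  exact h

theorem avoid_finite (a b : ℤ) : (avoid a b).Finite := (permIco_finite a b).subset fun _ h => h.1

theorem oneOcc_finite (a b : ℤ) : (oneOcc a b).Finite := (permIco_finite a b).subset fun _ h => h.1

theorem permIco_mem {σ : Perm ℤ} {a b : ℤ} (hσ : σ ∈ permIco a b) (i : ℤ) :
    (a ≤ σ i ∧ σ i < b) ↔ (a ≤ i ∧ i < b) := by
  constructor
  · intro h
    by_contra hi
    exact hi (hσ i hi ▸ h)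
  · intro h
    by_contra hi
    have := σ.injective (hσ (σ i) hi)
    rw [this] at hi
    exact hi h

/-- All inversions take place inside the interval. -/
theorem permIco_inv {σ : Perm ℤ} {a b i l : ℤ} (hσ : σ ∈ permIco a b) (hil : i < l)
    (h : σ l < σ i) : (a ≤ i ∧ i < b) ∧ (a ≤ l ∧ l < b) := by
  have h1 := hσ i
  have h2 := hσ l
  have h3 := permIco_mem hσ i
  have h4 := permIco_mem hσ l
  constructor
  · by_contra hi
    rw [h1 hi] at h h3
    by_cases hl : a ≤ l ∧ l < b
    · have := h4.2 hl; omega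
    · have := h2 hl; omega
  · by_contra hl
    rw [h2 hl] at h h4
    by_cases hi : a ≤ i ∧ i < b
    · have := h3.2 hi; omega
    · have := h1 hi; omega

theorem hasMid_mem {σ : Perm ℤ} {a b j : ℤ} (hσ : σ ∈ permIco a b) (h : HasMid σ j) :
    a < j ∧ j + 1 < b := by
  obtain ⟨⟨i, hi, hi'⟩, ⟨l, hl, hl'⟩⟩ := h
  have h1 := permIco_inv hσ hi hi'
  have h2 := permIco_inv hσ hl hl'
  omega

theorem permIco_mono {a b c d : ℤ} (h1 : c ≤ a) (h2 : b ≤ d) : permIco a b ⊆ permIco c d :=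
  fun σ hσ i hi => hσ i (by omega)

theorem permIco_succ_right {σ : Perm ℤ} {a b : ℤ} :
    σ ∈ permIco a b ↔ σ ∈ permIco a (b + 1) ∧ σ b = b := by
  constructor
  · exact fun h => ⟨permIco_mono le_rfl (by omega) h, h b (by omega)⟩
  · rintro ⟨h, hb⟩ i hi
    by_cases e : i = b
    · rw [e, hb]
    · exact h i (by omega)

theorem permIco_succ_left {σ : Perm ℤ} {a b : ℤ} :
    σ ∈ permIco (a + 1) b ↔ σ ∈ permIco a b ∧ σ a = a := by
  constructor
  · exact fun h => ⟨permIco_mono (by omega) le_rfl h, h a (by omega)⟩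
  · rintro ⟨h, hb⟩ i hi
    by_cases e : i = a
    · rw [e, hb]
    · exact h i (by omega)

/-- Conjugation by the translation by `c`. -/
def shiftPerm (c : ℤ) : Perm ℤ ≃ Perm ℤ := (Equiv.addRight c).permCongr

theorem shiftPerm_apply (c : ℤ) (σ : Perm ℤ) (x : ℤ) : shiftPerm c σ x = σ (x - c) + c := by
  simp [shiftPerm, sub_eq_add_neg]

theorem shiftPerm_permIco (c : ℤ) (σ : Perm ℤ) (a b : ℤ) :
    shiftPerm c σ ∈ permIco (a + c) (b + c) ↔ σ ∈ permIco a b := by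
  constructor
  · intro h i hi
    have := h (i + c) (by omega)
    rw [shiftPerm_apply, add_sub_cancel_right] at this
    omega
  · intro h i hi
    have := h (i - c) (by omega)
    rw [shiftPerm_apply]
    omega

theorem shiftPerm_hasMid (c : ℤ) (σ : Perm ℤ) (j : ℤ) :
    HasMid (shiftPerm c σ) j ↔ HasMid σ (j - c) := by
  simp only [HasMid, shiftPerm_apply, add_lt_add_iff_right]
  refine and_congr ?_ ?_
  · exact (Equiv.subRight c).exists_congr fun i => by simp
  · exact (Equiv.subRight c).exists_congr fun i => by simp

theorem shiftPerm_uniqMid (c : ℤ) (σ : Perm ℤ) (j : ℤ) :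
    UniqMid (shiftPerm c σ) j ↔ UniqMid σ (j - c) := by
  simp only [UniqMid, shiftPerm_apply, add_lt_add_iff_right]
  refine and_congr ?_ ?_
  · exact (Equiv.subRight c).existsUnique_congr fun {i} => by simp
  · exact (Equiv.subRight c).existsUnique_congr fun {i} => by simp

theorem ncard_avoid_shift (c a b : ℤ) : (avoid (a + c) (b + c)).ncard = (avoid a b).ncard := by
  have : avoid a b = shiftPerm c ⁻¹' avoid (a + c) (b + c) := by
    ext σ
    simp only [avoid, Set.mem_preimage, Set.mem_ofPred_eq, shiftPerm_permIco, shiftPerm_hasMid]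
    exact and_congr_right fun _ => (Equiv.subRight c).forall_congr_right.symm
  rw [this, Set.ncard_preimage_of_injective_subset_range (shiftPerm c).injective (by simp)]

theorem ncard_oneOcc_shift (c a b : ℤ) : (oneOcc (a + c) (b + c)).ncard = (oneOcc a b).ncard := by
  have : oneOcc a b = shiftPerm c ⁻¹' oneOcc (a + c) (b + c) := by
    ext σ
    simp only [oneOcc, Set.mem_preimage, Set.mem_ofPred_eq, shiftPerm_permIco, shiftPerm_hasMid,
      shiftPerm_uniqMid]
    refine and_congr_right fun _ => ((Equiv.subRight c).exists_congr fun k => ?_).symm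
    refine and_congr Iff.rfl ((Equiv.subRight c).forall_congr fun j => ?_)
    simp
  rw [this, Set.ncard_preimage_of_injective_subset_range (shiftPerm c).injective (by simp)]

/-! ### Counting 321-avoiding permutations -/

/-- `σ` is increasing on the positions `[a, j)`. -/
def IncOn (σ : Perm ℤ) (a j : ℤ) : Prop := ∀ i i', a ≤ i → i < i' → i' < j → σ i < σ i'

/-- The 321-avoiding permutations of `[a, b)` that are increasing on the positions `[a, j)`. -/
def incAvoid (a b j : ℤ) : Set (Perm ℤ) := {σ ∈ avoid a b | IncOn σ a j}

theorem ncard_incAvoid_shift (c a b j : ℤ) :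
    (incAvoid (a + c) (b + c) (j + c)).ncard = (incAvoid a b j).ncard := by
  have : incAvoid a b j = shiftPerm c ⁻¹' incAvoid (a + c) (b + c) (j + c) := by
    ext σ
    simp only [incAvoid, avoid, Set.mem_preimage, Set.mem_ofPred_eq, shiftPerm_permIco,
      shiftPerm_hasMid]
    refine and_congr
      (and_congr_right fun _ => (Equiv.subRight c).forall_congr_right.symm) ?_
    constructor
    · intro h i i' h1 h2 h3
      have := h (i - c) (i' - c) (by omega) (by omega) (by omega)
      simp only [shiftPerm_apply]
      omega
    · intro h i i' h1 h2 h3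
      have := h (i + c) (i' + c) (by omega) (by omega) (by omega)
      simp only [shiftPerm_apply, add_sub_cancel_right] at this
      omega
  rw [this, Set.ncard_preimage_of_injective_subset_range (shiftPerm c).injective (by simp)]

/-- A permutation of `[0, n)` increasing on all of `[0, n)` is the identity. -/
theorem incAvoid_self (n : ℤ) : incAvoid 0 n n = {1} := by
  ext σ
  simp only [incAvoid, avoid, Set.mem_ofPred_eq, Set.mem_singleton_iff]
  constructor
  · rintro ⟨⟨hσ, -⟩, hinc⟩
    have hmono : Monotone fun i => σ i - i := by
      refine monotone_int_of_le_succ fun i => ?_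
      have hne : σ i ≠ σ (i + 1) := fun h => by have := σ.injective h; omega
      by_contra hlt
      have h := permIco_inv hσ (show i < i + 1 by omega) (by omega)
      have := hinc i (i + 1) (by omega) (by omega) (by omega)
      omega
    ext i
    have h1 := hmono (min_le_left i (-1))
    have h2 := hmono (le_max_left i n)
    simp only [hσ (min i (-1)) (by omega), hσ (max i n) (by omega)] at h1 h2
    simp only [Equiv.Perm.coe_one, id_eq]
    omega
  · rintro rfl
    refine ⟨⟨fun i _ => rfl, ?_⟩, fun i i' _ h _ => h⟩
    rintro j ⟨⟨i, h1, h2⟩, -⟩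
    simp only [Equiv.Perm.coe_one, id_eq] at h2
    omega

/-- The cycle sending `p` to `0` and `i` to `i + 1` for `0 ≤ i < p`. Precomposing with it moves the
letter in position `0` to position `p`. -/
def headCycle (p : ℤ) (hp : 0 ≤ p) : Perm ℤ where
  toFun i := if i = p then 0 else if 0 ≤ i ∧ i < p then i + 1 else i
  invFun i := if i = 0 then p else if 0 < i ∧ i ≤ p then i - 1 else i
  left_inv i := by grind
  right_inv i := by grind

theorem headCycle_permIco {p b : ℤ} (hp : 0 ≤ p) (hb : p < b) : headCycle p hp ∈ permIco 0 b := by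
  intro i hi
  simp only [headCycle, Equiv.coe_fn_mk]
  grind

theorem permIco_mul {σ τ : Perm ℤ} {a b : ℤ} (h : σ ∈ permIco a b) (h' : τ ∈ permIco a b) :
    σ * τ ∈ permIco a b := fun i hi => by rw [Equiv.Perm.mul_apply, h' i hi, h i hi]

theorem permIco_symm {σ : Perm ℤ} {a b : ℤ} (h : σ ∈ permIco a b) :
    σ⁻¹ ∈ permIco a b := fun i hi => by rw [Equiv.Perm.inv_eq_iff_eq, h i hi]

/-- Moving the minimum `0` from position `0` to position `j` neither creates nor destroys
occurrences of 321 if the letters it jumps over are increasing. -/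
theorem headCycle_avoid {π : Perm ℤ} {b j : ℤ} (hj : 0 ≤ j) (hjb : j < b) (hπ : π ∈ permIco 1 b)
    (hinc : IncOn π 1 (j + 1)) :
    (∀ x, ¬HasMid (π * headCycle j hj) x) ↔ ∀ x, ¬HasMid π x := by
  have hπ0 : π ∈ permIco 0 b := permIco_mono (by omega) le_rfl hπ
  have h0 : π 0 = 0 := hπ 0 (by omega)
  have hσ := permIco_mul hπ0 (headCycle_permIco hj hjb)
  have e1 : (π * headCycle j hj) j = 0 := by simp [headCycle, h0]
  have e2 : ∀ i, 0 ≤ i → i < j → (π * headCycle j hj) i = π (i + 1) := by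
    intro i hi hi'
    simp [headCycle, hi, hi', hi'.ne]
  have e3 : ∀ i, j < i → (π * headCycle j hj) i = π i := by
    intro i hi
    simp [headCycle, hi.ne', hi.le]
  generalize π * headCycle j hj = σ at *
  constructor
  · rintro h x ⟨⟨i, hi, hi'⟩, ⟨l, hl, hl'⟩⟩
    have h1 := permIco_inv hπ hi hi'
    have h2 := permIco_inv hπ hl hl'
    have hx : j < x := by
      by_contra hx
      have := hinc i x (by omega) hi (by omega)
      omega
    refine h x ⟨?_, ⟨l, hl, by rw [e3 x hx, e3 l (by omega)]; exact hl'⟩⟩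
    by_cases hij : j < i
    · exact ⟨i, hi, by rw [e3 x hx, e3 i hij]; exact hi'⟩
    · refine ⟨i - 1, by omega, ?_⟩
      rw [e3 x hx, e2 (i - 1) (by omega) (by omega), sub_add_cancel]
      exact hi'
  · rintro h x ⟨⟨i, hi, hi'⟩, ⟨l, hl, hl'⟩⟩
    have h1 := permIco_inv hσ hi hi'
    have h2 := permIco_inv hσ hl hl'
    have h3 := (permIco_mem hσ l).2 h2.2
    have h4 := (permIco_mem hσ x).2 h1.2
    have hxj : x ≠ j := by rintro rfl; omega
    have hij : i ≠ j := by rintro rfl; omega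
    have hx : j < x := by
      by_contra hx
      rw [e2 x (by omega) (by omega), e2 i (by omega) (by omega)] at hi'
      have := hinc (i + 1) (x + 1) (by omega) (by omega) (by omega)
      omega
    rw [e3 x hx] at hi' hl'
    rw [e3 l (by omega)] at hl'
    refine h x ⟨?_, ⟨l, hl, hl'⟩⟩
    by_cases hij : j < i
    · exact ⟨i, hi, by rwa [e3 i hij] at hi'⟩
    · exact ⟨i + 1, by omega, by rwa [e2 i (by omega) (by omega)] at hi'⟩

open Classical in
/-- In a 321-avoiding permutation of `[0, b)` that is increasing on `[0, j)` but not on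
`[0, j + 1)`, the minimum `0` stands in position `0` or in position `j`; removing it is a bijection
onto the 321-avoiding permutations of `[1, b)` increasing on `[1, j)`. -/
theorem ncard_incAvoid_diff {b j : ℤ} (hj : 1 ≤ j) (hjb : j < b) :
    (incAvoid 1 b j).ncard = (incAvoid 0 b j \ incAvoid 0 b (j + 1)).ncard := by
  have hj0 : 0 ≤ j := by omega
  have c1 : headCycle j hj0 j = 0 := by simp [headCycle]
  have c2 : ∀ i, 0 ≤ i → i < j → headCycle j hj0 i = i + 1 := by
    intro i hi hi'
    simp [headCycle, hi, hi', hi'.ne]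
  refine Set.ncard_congr (fun π _ => if IncOn π 1 (j + 1) then π * headCycle j hj0 else π) ?_ ?_ ?_
  · rintro π ⟨⟨hπ, hav⟩, hinc⟩
    have hπ0 : π ∈ permIco 0 b := permIco_mono (by omega) le_rfl hπ
    have h0 : π 0 = 0 := hπ 0 (by omega)
    split_ifs with h
    · refine ⟨⟨⟨permIco_mul hπ0 (headCycle_permIco hj0 hjb),
        (headCycle_avoid hj0 hjb hπ h).2 hav⟩, ?_⟩, ?_⟩
      · intro i i' h1 h2 h3
        rw [Equiv.Perm.mul_apply, Equiv.Perm.mul_apply, c2 i h1 (by omega), c2 i' (by omega) h3]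
        exact h _ _ (by omega) (by omega) (by omega)
      · rintro ⟨-, h'⟩
        have := h' (j - 1) j (by omega) (by omega) (by omega)
        rw [Equiv.Perm.mul_apply, Equiv.Perm.mul_apply, c1, h0, c2 _ (by omega) (by omega),
          sub_add_cancel] at this
        have := (permIco_mem hπ0 j).2 ⟨hj0, hjb⟩
        omega
    · refine ⟨⟨⟨hπ0, hav⟩, ?_⟩, ?_⟩
      · intro i i' h1 h2 h3
        rcases h1.eq_or_lt with rfl | h1
        · have := (permIco_mem hπ i').2 (by omega)
          omega
        · exact hinc i i' (by omega) h2 h3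
      · rintro ⟨-, h'⟩
        exact h fun i i' h1 h2 h3 => h' i i' (by omega) h2 h3
  · rintro π π' ⟨⟨hπ, -⟩, -⟩ ⟨⟨hπ', -⟩, -⟩ h
    have h0 : π 0 = 0 := hπ 0 (by omega)
    have h0' : π' 0 = 0 := hπ' 0 (by omega)
    split_ifs at h with h1 h2 h2
    · exact mul_right_cancel h
    · have := DFunLike.congr_fun h j
      rw [Equiv.Perm.mul_apply, c1, h0, ← h0'] at this
      have := π'.injective this
      omega
    · have := DFunLike.congr_fun h j
      rw [Equiv.Perm.mul_apply, c1, h0', ← h0] at this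
      have := π.injective this
      omega
    · exact h
  · rintro σ ⟨⟨⟨hσ, hav⟩, hinc⟩, hnot⟩
    have hd : ∃ i, 0 ≤ i ∧ i < j ∧ σ j < σ i := by
      by_contra! hcon
      refine hnot ⟨⟨hσ, hav⟩, fun i i' h1 h2 h3 => ?_⟩
      by_cases hi' : i' < j
      · exact hinc i i' h1 h2 hi'
      · obtain rfl : i' = j := by omega
        refine lt_of_le_of_ne (hcon i h1 h2) fun h => ?_
        have := σ.injective h
        omega
    obtain ⟨d, hd0, hdj, hd⟩ := hd
    have hp : σ 0 = 0 ∨ σ j = 0 := by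
      have hp' : σ (σ⁻¹ 0) = 0 := by simp
      have hp := (permIco_mem hσ (σ⁻¹ 0)).1 (by omega)
      generalize σ⁻¹ 0 = p at hp hp'
      rcases lt_trichotomy p j with h | rfl | h
      · rcases hp.1.eq_or_lt with rfl | h'
        · exact Or.inl hp'
        · have h1 := hinc 0 p le_rfl h' h
          have h2 := (permIco_mem hσ 0).2 (by omega)
          omega
      · exact Or.inr hp'
      · refine absurd ⟨⟨d, hdj, hd⟩, ⟨p, h, ?_⟩⟩ (hav j)
        have h2 := (permIco_mem hσ j).2 (by omega)
        refine lt_of_le_of_ne (by omega) fun h => ?_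
        have := σ.injective h
        omega
    rcases hp with hp | hp
    · have hσ1 : σ ∈ permIco 1 b := (permIco_succ_left (a := 0)).2 ⟨hσ, hp⟩
      refine ⟨σ, ⟨⟨hσ1, hav⟩, fun i i' h1 h2 h3 => hinc i i' (by omega) h2 h3⟩, ?_⟩
      refine if_neg fun h => ?_
      rcases hd0.eq_or_lt with rfl | hd0
      · have h2 := (permIco_mem hσ j).2 (by omega)
        omega
      · have := h d j (by omega) hdj (by omega)
        omega
    · obtain ⟨π, rfl⟩ : ∃ π, σ = π * headCycle j hj0 := ⟨σ * (headCycle j hj0)⁻¹, by simp⟩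
      have h0 : π 0 = 0 := by rwa [Equiv.Perm.mul_apply, c1] at hp
      have hπ0 : π ∈ permIco 0 b := by
        have := permIco_mul hσ (permIco_symm (headCycle_permIco hj0 hjb))
        rwa [mul_inv_cancel_right] at this
      have hπ : π ∈ permIco 1 b := (permIco_succ_left (a := 0)).2 ⟨hπ0, h0⟩
      have hi : IncOn π 1 (j + 1) := by
        intro i i' h1 h2 h3
        have := hinc (i - 1) (i' - 1) (by omega) (by omega) (by omega)
        rwa [Equiv.Perm.mul_apply, Equiv.Perm.mul_apply, c2 _ (by omega) (by omega),
          c2 _ (by omega) (by omega), sub_add_cancel, sub_add_cancel] at this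
      refine ⟨π, ⟨⟨hπ, (headCycle_avoid hj0 hjb hπ hi).1 hav⟩, ?_⟩, if_pos hi⟩
      exact fun i i' h1 h2 h3 => hi i i' h1 h2 (by omega)

theorem incAvoid_finite (a b j : ℤ) : (incAvoid a b j).Finite :=
  (avoid_finite a b).subset fun _ h => h.1

/-- Permutations increasing on `[0, j)` but not on `[0, j + 1)` lose their minimum, which gives the
recursion of the ballot numbers. The start is that increasing on `[0, 0)` and on `[0, 1)` are both
void conditions. -/
theorem ncard_incAvoid (m j : ℕ) : (incAvoid 0 (j + m) j).ncard = ballot (j + 1) m := by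
  induction m generalizing j with
  | zero => simp [incAvoid_self, ballot_zero_right]
  | succ m ihm =>
    induction j with
    | zero =>
      have h : incAvoid 0 (((0 : ℕ) : ℤ) + ((m + 1 : ℕ) : ℤ)) ((0 : ℕ) : ℤ) =
          incAvoid 0 (((1 : ℕ) : ℤ) + ((m : ℕ) : ℤ)) ((1 : ℕ) : ℤ) := by
        ext σ
        simp only [incAvoid, IncOn]
        push_cast
        rw [show (0 : ℤ) + (m + 1) = 1 + m by ring]
        refine and_congr_right fun _ => ?_
        constructor <;> intro _ i i' h1 h2 h3 <;> omega
      rw [h, ihm, ballot_rec, ballot_zero_left, zero_add]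
    | succ j ih =>
      have hsub : incAvoid 0 (((j + 1 : ℕ) : ℤ) + ((m + 1 : ℕ) : ℤ)) (((j + 1 : ℕ) : ℤ) + 1) ⊆
          incAvoid 0 (((j + 1 : ℕ) : ℤ) + ((m + 1 : ℕ) : ℤ)) ((j + 1 : ℕ) : ℤ) :=
        fun σ h => ⟨h.1, fun i i' h1 h2 h3 => h.2 i i' h1 h2 (by omega)⟩
      have h1 := ncard_incAvoid_shift 1 0 (j + (m + 1 : ℕ)) j
      have h2 := ihm (j + 2)
      rw [ih] at h1
      rw [← Set.ncard_sdiff_add_ncard_of_subset hsub (incAvoid_finite _ _ _),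
        ← ncard_incAvoid_diff (by push_cast; omega) (by push_cast; omega), ballot_rec, ← h1, ← h2]
      push_cast
      congr 3 <;> ring

/-- The 321-avoiding permutations of an interval of length `n` are counted by the Catalan number
`C^{(1)}_n`. -/
theorem ncard_avoid (a b : ℤ) (n : ℕ) (h : b = a + n) : (avoid a b).ncard = ballot 1 n := by
  rw [h, show avoid a (a + n) = avoid (0 + a) (n + a) by rw [zero_add, add_comm],
    ncard_avoid_shift]
  have : avoid 0 (n : ℤ) = incAvoid 0 (((0 : ℕ) : ℤ) + (n : ℤ)) ((0 : ℕ) : ℤ) := by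
    ext σ
    simp only [incAvoid, Nat.cast_zero, zero_add]
    refine ⟨fun h => ⟨h, fun i i' h1 h2 h3 => by omega⟩, fun h => h.1⟩
  rw [this, ncard_incAvoid]

/-! ### Splitting at the middle of a unique occurrence -/

/-- A position that is the middle of exactly one occurrence of 321 is a fixed point: one larger
letter to the left and one smaller letter to the right cancel out. -/
theorem UniqMid.fixed {π : Perm ℤ} {n k : ℤ} (hπ : π ∈ permIco 0 n) (h : UniqMid π k) :
    π k = k := by
  obtain ⟨⟨p, ⟨hpk, hp⟩, hp'⟩, ⟨q, ⟨hkq, hq⟩, hq'⟩⟩ := h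
  have h1 := permIco_inv hπ hpk hp
  have h2 := permIco_inv hπ hkq hq
  have hk := (permIco_mem hπ k).2 h1.2
  have heq : insert q ((Finset.Ico 0 k).erase p) = (Finset.Ico 0 (π k)).map π⁻¹.toEmbedding := by
    ext x
    simp only [Finset.mem_insert, Finset.mem_erase, Finset.mem_Ico, Finset.mem_map_equiv]
    rw [show (Equiv.symm π⁻¹) x = π x from rfl]
    have hx := permIco_mem hπ x
    have hxk : π x = π k → x = k := fun h => π.injective h
    have hpx := hp' x
    have hqx := hq' x
    simp only at hpx hqx
    constructor
    · rintro (rfl | ⟨hxp, hx0, hxk'⟩)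
      · have := hx.2 h2.2
        omega
      · by_contra hcon
        exact hxp (hpx ⟨hxk', by omega⟩)
    · rintro ⟨hx0, hxv⟩
      rcases lt_trichotomy x k with h | rfl | h
      · refine Or.inr ⟨?_, by omega, h⟩
        rintro rfl
        omega
      · omega
      · exact Or.inl (hqx ⟨h, hxv⟩)
  have hc := congrArg Finset.card heq
  rw [Finset.card_map, Finset.card_insert_of_notMem (by simp; omega),
    Finset.card_erase_of_mem (by simp; omega), Int.card_Ico, Int.card_Ico] at hc
  omega

/-- `π` arises by gluing `α` (living on positions up to `k`) and `β` (living on positions from `k`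
on) at the fixed point `k`: the word of `α` is that of `π` up to position `k`, with the unique
letter larger than `k`, in position `p`, replaced by `k`, followed by the unique letter of `π`
smaller than `k` found to the right of `k`, in position `q`. The word of `β` is symmetric. -/
structure Glued (π α β : Perm ℤ) (k p q : ℤ) : Prop where
  p_lt : p < k
  lt_q : k < q
  pi_p : π p = β k
  lt_beta : k < β k
  pi_k : π k = k
  pi_q : π q = α k
  alpha_lt : α k < k
  alpha_p : α p = k
  beta_q : β q = k
  pi_left : ∀ i, i < k → i ≠ p → π i = α i
  left_lt : ∀ i, i < k → i ≠ p → π i < k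
  pi_right : ∀ i, k < i → i ≠ q → π i = β i
  lt_right : ∀ i, k < i → i ≠ q → k < π i
  beta_left : ∀ i, i < k → β i = i
  alpha_right : ∀ i, k < i → α i = i

namespace Glued

variable {π α β : Perm ℤ} {k p q : ℤ}

theorem uniqMid (h : Glued π α β k p q) : UniqMid π k := by
  obtain ⟨h1, h2, h3, h4, h5, h6, h7, h8, h9, h10, h11, h12, h13, h14, h15⟩ := h
  refine ⟨⟨p, ⟨h1, by omega⟩, ?_⟩, ⟨q, ⟨h2, by omega⟩, ?_⟩⟩
  · rintro i ⟨hi, hi'⟩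
    by_contra hip
    have := h11 i hi hip
    omega
  · rintro i ⟨hi, hi'⟩
    by_contra hip
    have := h13 i hi hip
    omega

/-- The left parts of occurrences with middle `j > k` in `π` and in `β` correspond under exchanging
the positions `p` and `k`, which carry the letter `β k` in `π` and `β`, respectively. The right
parts agree. -/
theorem right (h : Glued π α β k p q) (j : ℤ) (hj : k < j) :
    (HasMid π j ↔ HasMid β j) ∧ (UniqMid π j ↔ UniqMid β j) := by
  obtain ⟨h1, h2, h3, h4, h5, h6, h7, h8, h9, h10, h11, h12, h13, h14, h15⟩ := h
  by_cases hjq : j = q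
  · have hR : ∀ l, ¬(j < l ∧ π l < π j) := by
      rintro l ⟨hl, hl'⟩
      have := h13 l (by omega) (by omega)
      subst hjq
      omega
    have hR' : ∀ l, ¬(j < l ∧ β l < β j) := by
      rintro l ⟨hl, hl'⟩
      have := h13 l (by omega) (by omega)
      have := h12 l (by omega) (by omega)
      subst hjq
      omega
    exact ⟨iff_of_false (fun h => h.2.elim hR) fun h => h.2.elim hR',
      iff_of_false (fun h => h.2.exists.elim hR) fun h => h.2.exists.elim hR'⟩
  · have hj1 := h12 j hj hjq
    have hj2 := h13 j hj hjq
    have hR : ∀ l, (j < l ∧ π l < π j) ↔ (j < l ∧ β l < β j) := by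
      intro l
      refine and_congr_right fun hl => ?_
      by_cases hlq : l = q
      · subst hlq; omega
      · rw [hj1, h12 l (by omega) hlq]
    have hL : ∀ i, (i < j ∧ π j < π i) ↔ (Equiv.swap p k i < j ∧ β j < β (Equiv.swap p k i)) := by
      intro i
      by_cases hip : i = p
      · subst hip
        rw [Equiv.swap_apply_left]
        omega
      by_cases hik : i = k
      · subst hik
        rw [Equiv.swap_apply_right, h14 p h1]
        omega
      rw [Equiv.swap_apply_of_ne_of_ne hip hik]
      refine and_congr_right fun hi => ?_
      rcases lt_or_gt_of_ne hik with hik | hik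
      · have := h11 i hik hip
        rw [h14 i hik]
        omega
      · by_cases hiq : i = q
        · subst hiq; omega
        · rw [hj1, h12 i hik hiq]
    exact ⟨and_congr ((Equiv.swap p k).exists_congr hL) (exists_congr hR),
      and_congr ((Equiv.swap p k).existsUnique_congr fun {i} => hL i) (existsUnique_congr hR)⟩

theorem left (h : Glued π α β k p q) (j : ℤ) (hj : j < k) :
    (HasMid π j ↔ HasMid α j) ∧ (UniqMid π j ↔ UniqMid α j) := by
  obtain ⟨h1, h2, h3, h4, h5, h6, h7, h8, h9, h10, h11, h12, h13, h14, h15⟩ := h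
  by_cases hjp : j = p
  · have hR : ∀ l, ¬(l < j ∧ π j < π l) := by
      rintro l ⟨hl, hl'⟩
      have := h11 l (by omega) (by omega)
      subst hjp
      omega
    have hR' : ∀ l, ¬(l < j ∧ α j < α l) := by
      rintro l ⟨hl, hl'⟩
      have := h11 l (by omega) (by omega)
      have := h10 l (by omega) (by omega)
      subst hjp
      omega
    exact ⟨iff_of_false (fun h => h.1.elim hR) fun h => h.1.elim hR',
      iff_of_false (fun h => h.1.exists.elim hR) fun h => h.1.exists.elim hR'⟩
  · have hj1 := h10 j hj hjp
    have hj2 := h11 j hj hjp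
    have hR : ∀ l, (l < j ∧ π j < π l) ↔ (l < j ∧ α j < α l) := by
      intro l
      refine and_congr_right fun hl => ?_
      by_cases hlp : l = p
      · subst hlp; omega
      · rw [hj1, h10 l (by omega) hlp]
    have hL : ∀ i, (j < i ∧ π i < π j) ↔ (j < Equiv.swap q k i ∧ α (Equiv.swap q k i) < α j) := by
      intro i
      by_cases hiq : i = q
      · subst hiq
        rw [Equiv.swap_apply_left]
        omega
      by_cases hik : i = k
      · subst hik
        rw [Equiv.swap_apply_right, h15 q h2]
        omega
      rw [Equiv.swap_apply_of_ne_of_ne hiq hik]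
      refine and_congr_right fun hi => ?_
      rcases lt_or_gt_of_ne hik with hik | hik
      · by_cases hip : i = p
        · subst hip; omega
        · rw [hj1, h10 i hik hip]
      · have := h13 i hik hiq
        rw [h15 i hik]
        omega
    exact ⟨and_congr (exists_congr hR) ((Equiv.swap q k).exists_congr hL),
      and_congr (existsUnique_congr hR) ((Equiv.swap q k).existsUnique_congr fun {i} => hL i)⟩

end Glued

/-- The gluing of `α` and `β` at `k`: in the product `α * β` the letters in positions `α⁻¹ k` and
`k` are `k` and `β k`; they are exchanged. -/
def glue (k : ℤ) (α β : Perm ℤ) : Perm ℤ := α * β * Equiv.swap (α⁻¹ k) k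

theorem glue_permIco {k n : ℤ} {α β : Perm ℤ} (hk : 0 ≤ k) (hkn : k < n)
    (hα : α ∈ permIco 0 (k + 1)) (hβ : β ∈ permIco k n) : glue k α β ∈ permIco 0 n := by
  have hα' : α ∈ permIco 0 n := permIco_mono le_rfl (by omega) hα
  refine permIco_mul (permIco_mul hα' (permIco_mono hk le_rfl hβ)) fun i hi => ?_
  refine Equiv.swap_apply_of_ne_of_ne ?_ (by omega)
  rintro rfl
  have := (permIco_mem hα' (α⁻¹ k)).1
  rw [show α (α⁻¹ k) = k by simp] at this
  exact hi (this (by omega))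

theorem glue_glued {k n : ℤ} {α β : Perm ℤ} (hk : 0 ≤ k) (hkn : k < n)
    (hα : α ∈ permIco 0 (k + 1)) (hβ : β ∈ permIco k n) (hαk : α k ≠ k) (hβk : β k ≠ k) :
    Glued (glue k α β) α β k (α⁻¹ k) (β⁻¹ k) := by
  have hp : α (α⁻¹ k) = k := by simp
  have hq : β (β⁻¹ k) = k := by simp
  have hg : ∀ i, glue k α β i = α (β (Equiv.swap (α⁻¹ k) k i)) := fun i => rfl
  generalize glue k α β = π at *
  generalize α⁻¹ k = p at *
  generalize β⁻¹ k = q at *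
  have hpk : p ≠ k := by rintro rfl; exact hαk hp
  have hqk : q ≠ k := by rintro rfl; exact hβk hq
  have hp1 := (permIco_mem hα p).1 (by omega)
  have hq1 := (permIco_mem hβ q).1 (by omega)
  have hα1 := (permIco_mem hα k).2 (by omega)
  have hβ1 := (permIco_mem hβ k).2 (by omega)
  have hαr : ∀ i, k < i → α i = i := fun i hi => hα i (by omega)
  have hβl : ∀ i, i < k → β i = i := fun i hi => hβ i (by omega)
  have hπl : ∀ i, i < k → i ≠ p → π i = α i := fun i hi hip => by
    rw [hg, Equiv.swap_apply_of_ne_of_ne hip (by omega), hβl i hi]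
  have hβi : ∀ i, k < i → i ≠ q → k < β i := fun i hi hiq => by
    by_cases h : i < n
    · have h1 := (permIco_mem hβ i).2 (by omega)
      have h2 : β i ≠ k := fun h => hiq (β.injective (h.trans hq.symm))
      omega
    · rwa [hβ i (by omega)]
  have hαi : ∀ i, i < k → i ≠ p → α i < k := fun i hi hip => by
    by_cases h : 0 ≤ i
    · have h1 := (permIco_mem hα i).2 (by omega)
      have h2 : α i ≠ k := fun h => hip (α.injective (h.trans hp.symm))
      omega
    · rwa [hα i (by omega)]
  have hπr : ∀ i, k < i → i ≠ q → π i = β i := fun i hi hiq => by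
    rw [hg, Equiv.swap_apply_of_ne_of_ne (by omega) (by omega), hαr _ (hβi i hi hiq)]
  refine ⟨by omega, by omega, ?_, by omega, ?_, ?_, by omega, hp, hq, hπl, ?_, hπr, ?_, hβl, hαr⟩
  · rw [hg, Equiv.swap_apply_left, hαr _ (by omega)]
  · rw [hg, Equiv.swap_apply_right, hβl p (by omega), hp]
  · rw [hg, Equiv.swap_apply_of_ne_of_ne (by omega) (by omega), hq]
  · exact fun i hi hip => hπl i hi hip ▸ hαi i hi hip
  · exact fun i hi hiq => hπr i hi hiq ▸ hβi i hi hiq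

theorem glue_injective {k n : ℤ} {α β α' β' : Perm ℤ} (hk : 0 ≤ k) (hkn : k < n)
    (hα : α ∈ permIco 0 (k + 1)) (hβ : β ∈ permIco k n) (hαk : α k ≠ k) (hβk : β k ≠ k)
    (hα' : α' ∈ permIco 0 (k + 1)) (hβ' : β' ∈ permIco k n) (hαk' : α' k ≠ k) (hβk' : β' k ≠ k)
    (h : glue k α β = glue k α' β') : α = α' ∧ β = β' := by
  have G := glue_glued hk hkn hα hβ hαk hβk
  have G' := glue_glued hk hkn hα' hβ' hαk' hβk'
  rw [← h] at G'
  have hp : α⁻¹ k = α'⁻¹ k := G.uniqMid.1.unique ⟨G.p_lt, by rw [G.pi_p, G.pi_k]; exact G.lt_beta⟩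
    ⟨G'.p_lt, by rw [G'.pi_p, G'.pi_k]; exact G'.lt_beta⟩
  have hq : β⁻¹ k = β'⁻¹ k := G.uniqMid.2.unique ⟨G.lt_q, by rw [G.pi_q, G.pi_k]; exact G.alpha_lt⟩
    ⟨G'.lt_q, by rw [G'.pi_q, G'.pi_k]; exact G'.alpha_lt⟩
  have h1 : α = α' := by
    ext i
    rcases lt_trichotomy i k with hi | rfl | hi
    · by_cases hip : i = α⁻¹ k
      · rw [hip, G.alpha_p, hp, G'.alpha_p]
      · rw [← G.pi_left i hi hip, G'.pi_left i hi (hp ▸ hip)]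
    · rw [← G.pi_q, hq, G'.pi_q]
    · rw [G.alpha_right i hi, G'.alpha_right i hi]
  subst h1
  exact ⟨rfl, mul_left_cancel (mul_right_cancel h)⟩

theorem exists_glue {k n : ℤ} {π : Perm ℤ} (hπ : π ∈ permIco 0 n) (h : UniqMid π k) :
    ∃ α β, α ∈ permIco 0 (k + 1) ∧ β ∈ permIco k n ∧ α k ≠ k ∧ β k ≠ k ∧ glue k α β = π := by
  have hk := h.fixed hπ
  obtain ⟨⟨p, ⟨hpk, hp⟩, hp'⟩, ⟨q, ⟨hkq, hq⟩, hq'⟩⟩ := h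
  have h1 := permIco_inv hπ hpk hp
  have h2 := permIco_inv hπ hkq hq
  simp only [hk] at hp hp' hq hq'
  set ρ := π * Equiv.swap p k with hρ
  -- `τ` moves the letter `π q < k` to position `k`, so it preserves the positions up to `k`
  set τ := ρ * Equiv.swap k q with hτ
  have ρp : ρ p = k := by simp [hρ, hk]
  have ρk : ρ k = π p := by simp [hρ]
  have ρi : ∀ i, i ≠ p → i ≠ k → ρ i = π i := fun i hi hi' => by
    rw [hρ, Equiv.Perm.mul_apply, Equiv.swap_apply_of_ne_of_ne hi hi']
  have τk : τ k = π q := by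
    rw [hτ, Equiv.Perm.mul_apply, Equiv.swap_apply_left, ρi q (by omega) (by omega)]
  have τq : τ q = π p := by rw [hτ, Equiv.Perm.mul_apply, Equiv.swap_apply_right, ρk]
  have τi : ∀ i, i ≠ k → i ≠ q → τ i = ρ i := fun i hi hi' => by
    rw [hτ, Equiv.Perm.mul_apply, Equiv.swap_apply_of_ne_of_ne hi hi']
  have hτk : ∀ x, τ x ≤ k ↔ x ≤ k := by
    intro x
    by_cases hxk : x = k
    · rw [hxk, τk]; omega
    by_cases hxq : x = q
    · rw [hxq, τq]; omega
    rw [τi x hxk hxq]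
    by_cases hxp : x = p
    · rw [hxp, ρp]; omega
    rw [ρi x hxp hxk]
    have hne : π x ≠ k := fun h => hxk (π.injective (h.trans hk.symm))
    constructor
    · intro h
      by_contra hx
      exact hxq (hq' x ⟨by omega, by omega⟩)
    · intro h
      by_contra hx
      exact hxp (hp' x ⟨by omega, by omega⟩)
  set α := Equiv.Perm.ofSubtype (τ.subtypePerm (p := fun x => x ≤ k) hτk) with hα
  have α1 : ∀ i, i ≤ k → α i = τ i := fun i hi => by
    rw [hα, Equiv.Perm.ofSubtype_apply_of_mem (p := fun x => x ≤ k) _ hi]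
    rfl
  have α2 : ∀ i, k < i → α i = i := fun i hi => by
    rw [hα, Equiv.Perm.ofSubtype_apply_of_not_mem (p := fun x => x ≤ k) _ (not_le.2 hi)]
  have αk : α k = π q := by rw [α1 k le_rfl, τk]
  have αp : α p = k := by rw [α1 p hpk.le, τi p (by omega) (by omega), ρp]
  have αp' : α⁻¹ k = p := by rw [Equiv.Perm.inv_eq_iff_eq, αp]
  have αinv : ∀ i, k < i → α⁻¹ i = i := fun i hi => by
    rw [Equiv.Perm.inv_eq_iff_eq, α2 i hi]
  refine ⟨α, α⁻¹ * ρ, ?_, ?_, ?_, ?_, ?_⟩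
  · intro i hi
    by_cases hik : k < i
    · exact α2 i hik
    · rw [α1 i (by omega), τi i (by omega) (by omega), ρi i (by omega) (by omega),
        hπ i (by omega)]
  · intro i hi
    rw [Equiv.Perm.mul_apply, Equiv.Perm.inv_eq_iff_eq]
    by_cases hik : i < k
    · rw [α1 i hik.le, τi i (by omega) (by omega)]
    · rw [α2 i (by omega), ρi i (by omega) (by omega), hπ i (by omega)]
  · rw [αk]; omega
  · rw [Equiv.Perm.mul_apply, ρk, αinv _ hp]
    omega
  · rw [glue, mul_inv_cancel_left, αp', hρ, mul_assoc, Equiv.swap_mul_self, mul_one]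

/-- Permutations for which `k` is the middle of a unique occurrence and the leftmost middle are
pairs of a 321-avoiding permutation of `[0, k]` not fixing its last point, and a permutation of
`[k, n)` not fixing its first point. Any condition `Q` on the occurrences with middle to the right
of `k` can be read off from the second component. -/
theorem ncard_piece {k n : ℤ} (hk : 0 ≤ k) (hkn : k < n) (Q : Perm ℤ → Prop)
    (hQ : ∀ π β : Perm ℤ, (∀ j, k < j → (HasMid π j ↔ HasMid β j) ∧ (UniqMid π j ↔ UniqMid β j)) →
      (Q π ↔ Q β)) :
    {π ∈ permIco 0 n | UniqMid π k ∧ (∀ j, j < k → ¬HasMid π j) ∧ Q π}.ncard =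
      {α ∈ avoid 0 (k + 1) | α k ≠ k}.ncard * {β ∈ permIco k n | β k ≠ k ∧ Q β}.ncard := by
  rw [← Set.ncard_prod]
  symm
  refine Set.ncard_congr (fun x _ => glue k x.1 x.2) ?_ ?_ ?_
  · rintro ⟨α, β⟩ ⟨⟨⟨hα, hav⟩, hαk⟩, ⟨hβ, hβk, hQβ⟩⟩
    have G := glue_glued hk hkn hα hβ hαk hβk
    exact ⟨glue_permIco hk hkn hα hβ, G.uniqMid, fun j hj => by
      rw [(G.left j hj).1]; exact hav j, (hQ _ _ G.right).2 hQβ⟩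
  · rintro ⟨α, β⟩ ⟨α', β'⟩ ⟨⟨⟨hα, hav⟩, hαk⟩, ⟨hβ, hβk, hQβ⟩⟩ ⟨⟨⟨hα', hav'⟩, hαk'⟩, ⟨hβ', hβk', hQβ'⟩⟩ h
    exact Prod.ext_iff.2 (glue_injective hk hkn hα hβ hαk hβk hα' hβ' hαk' hβk' h)
  · rintro π ⟨hπ, hu, hl, hQπ⟩
    obtain ⟨α, β, hα, hβ, hαk, hβk, rfl⟩ := exists_glue hπ hu
    have G := glue_glued hk hkn hα hβ hαk hβk
    refine ⟨(α, β), ⟨⟨⟨hα, fun j hj => ?_⟩, hαk⟩, ⟨hβ, hβk, (hQ _ _ G.right).1 hQπ⟩⟩, rfl⟩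
    have := hasMid_mem hα hj
    exact hl j (by omega) ((G.left j (by omega)).1.2 hj)

/-! ### Summing over the leftmost middle -/

theorem ncard_partition {s : Set (Perm ℤ)} (hs : s.Finite) (P : ℕ → Set (Perm ℤ)) (n : ℕ)
    (hP : ∀ σ, σ ∈ s ↔ ∃ k, k < n ∧ σ ∈ P k)
    (hd : ∀ σ k k', σ ∈ P k → σ ∈ P k' → k = k') :
    s.ncard = ∑ k ∈ Finset.range n, (P k).ncard := by
  have h : s = ⋃ k : Fin n, P k := by
    ext σ
    rw [hP, Set.mem_iUnion]
    exact ⟨fun ⟨k, h, h'⟩ => ⟨⟨k, h⟩, h'⟩, fun ⟨k, h⟩ => ⟨k, k.2, h⟩⟩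
  rw [h, Set.ncard_iUnion_of_finite, finsum_eq_sum_of_fintype,
    Fin.sum_univ_eq_sum_range (fun k => (P k).ncard)]
  · exact fun k => hs.subset fun σ h => (hP σ).2 ⟨k, k.2, h⟩
  · intro k k' hk
    refine Set.disjoint_left.2 fun σ h h' => hk (Fin.ext (hd σ k k' h h'))

theorem coeff_ballotSeries (k n : ℕ) : (ballotSeries k).coeff n = ballot k n := by
  simp [ballotSeries]

theorem coeff_X_ballotSeries_three (k : ℕ) :
    (PowerSeries.X * ballotSeries 3).coeff k = (ballot 1 (k + 1) : ℤ) - ballot 1 k := by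
  have h1 := congrArg (PowerSeries.coeff k) (ballotSeries_succ 1)
  rw [map_add, coeff_ballotSeries, coeff_ballotSeries] at h1
  rw [ballot_rec 0 k, ballot_zero_left]
  simp only [zero_add, Nat.reduceAdd] at h1 ⊢
  omega

/-- Fixing the last point `k` of `[0, k]` means being a permutation of `[0, k)`, so the avoiders of
`[0, k]` that do not fix it are counted by a difference of Catalan numbers. -/
theorem ncard_avoid_last (k : ℕ) :
    (({α ∈ avoid 0 (k + 1) | α k ≠ k}.ncard : ℕ) : ℤ) =
      (PowerSeries.X * ballotSeries 3).coeff k := by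
  have h : {α ∈ avoid 0 ((k : ℤ) + 1) | α k ≠ k} = avoid 0 ((k : ℤ) + 1) \ avoid 0 k := by
    ext σ
    simp only [avoid, Set.mem_sdiff, Set.mem_ofPred_eq, permIco_succ_right (b := (k : ℤ))]
    tauto
  have hsub : avoid 0 (k : ℤ) ⊆ avoid 0 (k + 1) := fun σ h =>
    ⟨permIco_mono le_rfl (by omega) h.1, h.2⟩
  have h1 := Set.ncard_sdiff_add_ncard_of_subset hsub (avoid_finite _ _)
  rw [ncard_avoid 0 k k (by simp), ncard_avoid 0 (k + 1) (k + 1) (by simp)] at h1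
  rw [h, coeff_X_ballotSeries_three, ← h1]
  push_cast
  ring

theorem ncard_avoid_first (k m : ℕ) :
    (({β ∈ permIco k (m + k + 1) | β k ≠ k ∧ ∀ j, (k : ℤ) < j → ¬HasMid β j}.ncard : ℕ) : ℤ) =
      (PowerSeries.X * ballotSeries 3).coeff m := by
  have h : {β ∈ permIco k (m + k + 1) | β k ≠ k ∧ ∀ j, (k : ℤ) < j → ¬HasMid β j} =
      avoid k (m + k + 1) \ avoid (k + 1) (m + k + 1) := by
    ext σ
    simp only [avoid, Set.mem_sdiff, Set.mem_ofPred_eq, permIco_succ_left (a := (k : ℤ))]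
    constructor
    · rintro ⟨h1, h2, h3⟩
      refine ⟨⟨h1, fun j hj => h3 j (hasMid_mem h1 hj).1 hj⟩, fun h => h2 h.1.2⟩
    · rintro ⟨⟨h1, h2⟩, h3⟩
      exact ⟨h1, fun h => h3 ⟨⟨h1, h⟩, h2⟩, fun j _ => h2 j⟩
  have hsub : avoid ((k : ℤ) + 1) (m + k + 1) ⊆ avoid k (m + k + 1) := fun σ h =>
    ⟨permIco_mono (by omega) le_rfl h.1, h.2⟩
  have h1 := Set.ncard_sdiff_add_ncard_of_subset hsub (avoid_finite _ _)
  rw [ncard_avoid (k + 1) (m + k + 1) m (by ring),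
    ncard_avoid k (m + k + 1) (m + 1) (by push_cast; ring)] at h1
  rw [h, coeff_X_ballotSeries_three, ← h1]
  push_cast
  ring

theorem sum_range_coeff (F G : PowerSeries ℤ) (n : ℕ) :
    ∑ k ∈ Finset.range (n + 1), F.coeff k * G.coeff (n - k) = (F * G).coeff n := by
  rw [PowerSeries.coeff_mul,
    Finset.Nat.sum_antidiagonal_eq_sum_range_succ_mk]

/-- The generating function of the permutations with exactly one occurrence of 321 is
`X ^ 3 * C ^ 6`, where `C` is the Catalan series. -/
theorem ncard_oneOcc (n : ℕ) :
    ((oneOcc 0 n).ncard : ℤ) = (PowerSeries.X ^ 3 * ballotSeries 6).coeff n := by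
  have hpart := ncard_partition (oneOcc_finite 0 n)
    (fun k => {π ∈ permIco 0 n | UniqMid π k ∧ (∀ j, j < (k : ℤ) → ¬HasMid π j) ∧
      ∀ j, (k : ℤ) < j → ¬HasMid π j}) n ?_ ?_
  · rcases n with _ | n
    · rw [hpart]
      simp
    · rw [hpart, show PowerSeries.X ^ 3 * ballotSeries 6 =
          PowerSeries.X * ((PowerSeries.X * ballotSeries 3) * (PowerSeries.X * ballotSeries 3)) by
          rw [← ballotSeries_mul 3 3]; ring, PowerSeries.coeff_succ_X_mul, ← sum_range_coeff]
      push_cast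
      refine Finset.sum_congr rfl fun k hk => ?_
      obtain ⟨m, rfl⟩ := Nat.exists_eq_add_of_le' (Nat.lt_succ_iff.1 (Finset.mem_range.1 hk))
      rw [ncard_piece (by omega) (by push_cast; omega) (fun π => ∀ j, (k : ℤ) < j → ¬HasMid π j)
        fun π β h => forall₂_congr fun j hj => not_congr (h j hj).1]
      rw [Nat.add_sub_cancel, ← ncard_avoid_first k m, ← ncard_avoid_last]
      push_cast
      rfl
  · intro σ
    constructor
    · rintro ⟨hσ, k, hk, hk'⟩
      have := hasMid_mem hσ hk.hasMid
      lift k to ℕ using (by omega)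
      exact ⟨k, by omega, hσ, hk, fun j hj => hk' j hj.ne, fun j hj => hk' j hj.ne'⟩
    · rintro ⟨k, -, hσ, hk, h1, h2⟩
      exact ⟨hσ, k, hk, fun j hj => (lt_or_gt_of_ne hj).elim (h1 j) (h2 j)⟩
  · rintro σ k k' ⟨hσ, hk, h1, h2⟩ ⟨-, hk', h1', h2'⟩
    by_contra hne
    rcases lt_or_gt_of_ne hne with h | h
    · exact h1' k (by omega) hk.hasMid
    · exact h1 k' (by omega) hk'.hasMid

theorem ncard_oneOcc_first (k m : ℕ) :
    (({β ∈ permIco k (m + k + 1) | β k ≠ k ∧ ∃ k', (k : ℤ) < k' ∧ UniqMid β k' ∧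
      ∀ j, (k : ℤ) < j → j ≠ k' → ¬HasMid β j}.ncard : ℕ) : ℤ) =
      (PowerSeries.X ^ 2 * ballotSeries 6 - PowerSeries.X ^ 3 * ballotSeries 6).coeff m := by
  have h : {β ∈ permIco k (m + k + 1) | β k ≠ k ∧ ∃ k', (k : ℤ) < k' ∧ UniqMid β k' ∧
      ∀ j, (k : ℤ) < j → j ≠ k' → ¬HasMid β j} =
      oneOcc k (m + k + 1) \ oneOcc (k + 1) (m + k + 1) := by
    ext σ
    simp only [oneOcc, Set.mem_sdiff, Set.mem_ofPred_eq, permIco_succ_left (a := (k : ℤ))]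
    constructor
    · rintro ⟨h1, h2, k', h3, h4, h5⟩
      exact ⟨⟨h1, k', h4, fun j hj hm => h5 j (hasMid_mem h1 hm).1 hj hm⟩, fun h => h2 h.1.2⟩
    · rintro ⟨⟨h1, k', h2, h3⟩, h4⟩
      exact ⟨h1, fun h => h4 ⟨⟨h1, h⟩, k', h2, h3⟩, k', (hasMid_mem h1 h2.hasMid).1, h2,
        fun j _ => h3 j⟩
  have hsub : oneOcc ((k : ℤ) + 1) (m + k + 1) ⊆ oneOcc k (m + k + 1) := fun σ h =>
    ⟨permIco_mono (by omega) le_rfl h.1, h.2⟩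
  have h1 := Set.ncard_sdiff_add_ncard_of_subset hsub (oneOcc_finite _ _)
  have h2 := ncard_oneOcc_shift k 0 (m + 1 : ℕ)
  have h3 := ncard_oneOcc_shift (k + 1) 0 m
  have h4 := ncard_oneOcc m
  have h5 := ncard_oneOcc (m + 1)
  rw [show (0 : ℤ) + k = k by ring, show ((m + 1 : ℕ) : ℤ) + k = m + k + 1 by push_cast; ring] at h2
  rw [show (0 : ℤ) + (k + 1) = k + 1 by ring, show (m : ℤ) + (k + 1) = m + k + 1 by ring] at h3
  rw [show PowerSeries.X ^ 3 * ballotSeries 6 = PowerSeries.X * (PowerSeries.X ^ 2 * ballotSeries 6)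
    by ring, PowerSeries.coeff_succ_X_mul] at h5
  rw [h, map_sub, ← h4, ← h5, ← h2, ← h3]
  omega

/-- Splitting at the leftmost middle leaves an avoiding permutation and one with a single
occurrence, which gives `X ^ 4 * (1 - X) * C ^ 9` for the Catalan series `C`. The relation
`C ^ (k + 1) = C ^ k + X * C ^ (k + 2)`, used for `k = 8` and `k = 9`, puts it into the final
form. -/
theorem ncard_twoOcc (n : ℕ) :
    ((twoOcc 0 n).ncard : ℤ) =
      (PowerSeries.X ^ 4 * ballotSeries 8 + PowerSeries.X ^ 6 * ballotSeries 11).coeff n := by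
  have hpart := ncard_partition ((permIco_finite 0 n).subset fun _ h => h.1 : (twoOcc 0 n).Finite)
    (fun k => {π ∈ permIco 0 n | UniqMid π k ∧ (∀ j, j < (k : ℤ) → ¬HasMid π j) ∧
      ∃ k', (k : ℤ) < k' ∧ UniqMid π k' ∧ ∀ j, (k : ℤ) < j → j ≠ k' → ¬HasMid π j}) n ?_ ?_
  · rcases n with _ | n
    · rw [hpart]
      simp
    · have hgf : PowerSeries.X ^ 4 * ballotSeries 8 + PowerSeries.X ^ 6 * ballotSeries 11 =
          PowerSeries.X * ((PowerSeries.X * ballotSeries 3) *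
            (PowerSeries.X ^ 2 * ballotSeries 6 - PowerSeries.X ^ 3 * ballotSeries 6)) := by
        have h1 := ballotSeries_mul 3 6
        have h2 := ballotSeries_succ 8
        have h3 := ballotSeries_succ 9
        simp only [Nat.reduceAdd] at h1 h2 h3
        linear_combination (-PowerSeries.X ^ 4 + PowerSeries.X ^ 5) * h1 -
          PowerSeries.X ^ 4 * h2 - PowerSeries.X ^ 5 * h3
      rw [hpart, hgf, PowerSeries.coeff_succ_X_mul, ← sum_range_coeff]
      push_cast
      refine Finset.sum_congr rfl fun k hk => ?_
      obtain ⟨m, rfl⟩ := Nat.exists_eq_add_of_le' (Nat.lt_succ_iff.1 (Finset.mem_range.1 hk))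
      rw [ncard_piece (by omega) (by push_cast; omega) (fun π => ∃ k', (k : ℤ) < k' ∧
        UniqMid π k' ∧ ∀ j, (k : ℤ) < j → j ≠ k' → ¬HasMid π j)
        fun π β h => exists_congr fun k' => and_congr_right fun hk' => and_congr (h k' hk').2
          (forall₂_congr fun j hj => imp_congr_right fun _ => not_congr (h j hj).1)]
      rw [Nat.add_sub_cancel, ← ncard_oneOcc_first k m, ← ncard_avoid_last]
      push_cast
      rfl
  · intro σ
    constructor
    · rintro ⟨hσ, k, k', hkk', hk, hk', h⟩
      have := hasMid_mem hσ hk.hasMid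
      lift k to ℕ using (by omega)
      exact ⟨k, by omega, hσ, hk, fun j hj => h j (by omega) (by omega), k', hkk', hk',
        fun j hj => h j (by omega)⟩
    · rintro ⟨k, -, hσ, hk, h1, k', hkk', hk', h2⟩
      exact ⟨hσ, k, k', hkk', hk, hk', fun j hj hj' =>
        (lt_or_gt_of_ne hj).elim (h1 j) fun h => h2 j h hj'⟩
  · rintro σ k k' ⟨hσ, hk, h1, h2⟩ ⟨-, hk', h1', h2'⟩
    by_contra hne
    rcases lt_or_gt_of_ne hne with h | h
    · exact h1' k (by omega) hk.hasMid
    · exact h1 k' (by omega) hk'.hasMid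

/-! ### From `Fin n` to integer intervals -/

/-- The integer points of `[0, n)`, indexed by `Fin n`. -/
def finEquivIco (n : ℕ) : Fin n ≃ {i : ℤ // 0 ≤ i ∧ i < n} where
  toFun i := ⟨i, by omega⟩
  invFun i := ⟨i.1.toNat, by omega⟩
  left_inv i := by simp
  right_inv i := Subtype.ext (by simp [i.2.1])

/-- Permutations of `Fin n` as permutations of `ℤ` supported in `[0, n)`. -/
def permFinEquiv (n : ℕ) : Perm (Fin n) ≃ permIco 0 n :=
  (finEquivIco n).permCongr.trans (Perm.subtypeEquivSubtypePerm fun i : ℤ => 0 ≤ i ∧ i < n)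

theorem permFinEquiv_apply {n : ℕ} (π : Perm (Fin n)) (i : Fin n) :
    (permFinEquiv n π : Perm ℤ) i = π i := by
  have h := Perm.subtypeEquivSubtypePerm_apply_of_mem ((finEquivIco n).permCongr π)
    (finEquivIco n i).2
  refine h.trans ?_
  simp [Equiv.permCongr_apply, finEquivIco]

theorem occ_iff {n : ℕ} (π : Perm (Fin n)) (t : Fin n × Fin n × Fin n) :
    IsOcc321 π t ↔ ((t.1 : ℕ) : ℤ) < (t.2.1 : ℕ) ∧ ((t.2.1 : ℕ) : ℤ) < (t.2.2 : ℕ) ∧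
      (permFinEquiv n π : Perm ℤ) t.2.2 < (permFinEquiv n π : Perm ℤ) t.2.1 ∧
      (permFinEquiv n π : Perm ℤ) t.2.1 < (permFinEquiv n π : Perm ℤ) t.1 := by
  simp only [permFinEquiv_apply, IsOcc321, Nat.cast_lt, Fin.val_fin_lt]

/-- Occurrences of 321 in the permutation of `ℤ` stay inside `[0, n)`. -/
theorem exists_occ {n : ℕ} (π : Perm (Fin n)) {i j l : ℤ} (hij : i < j) (hjl : j < l)
    (h1 : (permFinEquiv n π : Perm ℤ) j < (permFinEquiv n π : Perm ℤ) i)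
    (h2 : (permFinEquiv n π : Perm ℤ) l < (permFinEquiv n π : Perm ℤ) j) :
    ∃ t : Fin n × Fin n × Fin n, IsOcc321 π t ∧ i = (t.1 : ℕ) ∧ j = (t.2.1 : ℕ) ∧
      l = (t.2.2 : ℕ) := by
  have h3 := permIco_inv (permFinEquiv n π).2 hij h1
  have h4 := permIco_inv (permFinEquiv n π).2 hjl h2
  lift i to ℕ using h3.1.1
  lift j to ℕ using h3.2.1
  lift l to ℕ using h4.2.1
  refine ⟨(⟨i, by omega⟩, ⟨j, by omega⟩, ⟨l, by omega⟩), ?_, rfl, rfl, rfl⟩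
  exact (occ_iff π _).2 ⟨hij, hjl, h2, h1⟩

theorem uniqMid_of_occ {n : ℕ} (π : Perm (Fin n)) (t : Fin n × Fin n × Fin n)
    (ht : IsOcc321 π t) (hu : ∀ t', IsOcc321 π t' → t'.2.1 = t.2.1 → t' = t) :
    UniqMid (permFinEquiv n π) (t.2.1 : ℕ) := by
  obtain ⟨h1, h2, h3, h4⟩ := (occ_iff π t).1 ht
  refine ⟨⟨(t.1 : ℕ), ⟨h1, h4⟩, ?_⟩, ⟨(t.2.2 : ℕ), ⟨h2, h3⟩, ?_⟩⟩
  · rintro i ⟨hi, hi'⟩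
    obtain ⟨t', h, e1, e2, e3⟩ := exists_occ π hi h2 hi' h3
    rw [e1, hu t' h (Fin.ext (by omega))]
  · rintro i ⟨hi, hi'⟩
    obtain ⟨t', h, e1, e2, e3⟩ := exists_occ π h1 hi h4 hi'
    rw [e3, hu t' h (Fin.ext (by omega))]

theorem uniqMid_occ_unique {n : ℕ} {π : Perm (Fin n)} {t t' : Fin n × Fin n × Fin n}
    (ht : IsOcc321 π t) (ht' : IsOcc321 π t') (h : t'.2.1 = t.2.1)
    (hu : UniqMid (permFinEquiv n π) (t.2.1 : ℕ)) : t' = t := by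
  obtain ⟨h1, h2, h3, h4⟩ := (occ_iff π t).1 ht
  obtain ⟨h1', h2', h3', h4'⟩ := (occ_iff π t').1 ht'
  rw [h] at h1' h2' h3' h4'
  have e1 := hu.1.unique ⟨h1, h4⟩ ⟨h1', h4'⟩
  have e2 := hu.2.unique ⟨h2, h3⟩ ⟨h2', h3'⟩
  exact Prod.ext (Fin.ext (by omega)) (Prod.ext h (Fin.ext (by omega)))

/-- The condition of the counting problem says that exactly two positions are middles, each of a
single occurrence. -/
theorem twoOcc_iff {n : ℕ} (π : Perm (Fin n)) :
    (occ321Count n π = 2 ∧ ∃ t₁ t₂ : Fin n × Fin n × Fin n,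
      IsOcc321 π t₁ ∧ IsOcc321 π t₂ ∧ t₁.2.1 ≠ t₂.2.1) ↔
      (permFinEquiv n π : Perm ℤ) ∈ twoOcc 0 n := by
  have hcount : occ321Count n π = {t | IsOcc321 π t}.ncard := rfl
  rw [hcount]
  constructor
  · rintro ⟨h2, t₁, t₂, h₁, h₂, hne⟩
    wlog hlt : t₁.2.1 < t₂.2.1 generalizing t₁ t₂
    · exact this t₂ t₁ h₂ h₁ hne.symm (lt_of_le_of_ne (not_lt.1 hlt) hne.symm)
    have hne' : t₁ ≠ t₂ := fun h => hne (h ▸ rfl)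
    have hall : ∀ t, IsOcc321 π t → t = t₁ ∨ t = t₂ := by
      have heq : ({t₁, t₂} : Set _) = {t | IsOcc321 π t} := by
        refine Set.eq_of_subset_of_ncard_le ?_ ?_
        · rintro t (rfl | rfl) <;> assumption
        · rw [h2, Set.ncard_pair hne']
      intro t ht
      have : t ∈ ({t₁, t₂} : Set _) := heq ▸ ht
      exact this
    refine ⟨(permFinEquiv n π).2, (t₁.2.1 : ℕ), (t₂.2.1 : ℕ), by simpa using hlt,
      uniqMid_of_occ π t₁ h₁ ?_, uniqMid_of_occ π t₂ h₂ ?_, ?_⟩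
    · intro t' ht' he
      rcases hall t' ht' with rfl | rfl
      · rfl
      · exact absurd he.symm hne
    · intro t' ht' he
      rcases hall t' ht' with rfl | rfl
      · exact absurd he hne
      · rfl
    · rintro j hj hj' ⟨⟨i, hi, hi'⟩, ⟨l, hl, hl'⟩⟩
      obtain ⟨t, ht, -, e, -⟩ := exists_occ π hi hl hi' hl'
      rcases hall t ht with rfl | rfl
      · exact hj e
      · exact hj' e
  · rintro ⟨-, k, k', hlt, hk, hk', hno⟩
    obtain ⟨⟨i, hi, hi'⟩, ⟨l, hl, hl'⟩⟩ := hk.hasMid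
    obtain ⟨t₁, h₁, -, rfl, -⟩ := exists_occ π hi hl hi' hl'
    obtain ⟨⟨i', hi, hi'⟩, ⟨l', hl, hl'⟩⟩ := hk'.hasMid
    obtain ⟨t₂, h₂, -, rfl, -⟩ := exists_occ π hi hl hi' hl'
    have hne : t₁.2.1 ≠ t₂.2.1 := fun h => by rw [h] at hlt; omega
    refine ⟨?_, t₁, t₂, h₁, h₂, hne⟩
    have heq : {t | IsOcc321 π t} = {t₁, t₂} := by
      ext t
      constructor
      · intro ht
        by_cases e1 : t.2.1 = t₁.2.1
        · exact Or.inl (uniqMid_occ_unique h₁ ht e1 hk)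
        by_cases e2 : t.2.1 = t₂.2.1
        · exact Or.inr (uniqMid_occ_unique h₂ ht e2 hk')
        obtain ⟨a1, a2, a3, a4⟩ := (occ_iff π t).1 ht
        exact absurd ⟨⟨_, a1, a4⟩, ⟨_, a2, a3⟩⟩
          (hno (t.2.1 : ℕ) (fun h => e1 (Fin.ext (by omega))) fun h => e2 (Fin.ext (by omega)))
      · rintro (rfl | rfl) <;> assumption
    rw [heq, Set.ncard_pair fun h => hne (congrArg (fun t => t.2.1) h)]

theorem ballotZ_coeff (k n d : ℕ) :
    (ballotZ k ((n : ℤ) - d) : ℤ) = (PowerSeries.X ^ d * ballotSeries k).coeff n := by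
  rw [PowerSeries.coeff_X_pow_mul', ballotZ]
  by_cases h : d ≤ n
  · rw [if_pos (by omega), if_pos h, coeff_ballotSeries, show ((n : ℤ) - d).toNat = n - d by omega]
  · rw [if_neg (by omega), if_neg h, Nat.cast_zero]

/-- The number of permutations of `[n]` containing exactly two occurrences of the
pattern 321 such that the two occurrences have distinct middle positions is
`C^{(8)}_{n-4} + C^{(11)}_{n-6}`, with `C^{(k)}_m = 0` for `m < 0`. -/
theorem two321_distinct_middle_count (n : ℕ) :
    Nat.card {π : Equiv.Perm (Fin n) // occ321Count n π = 2 ∧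
        ∃ t₁ t₂ : Fin n × Fin n × Fin n,
          IsOcc321 π t₁ ∧ IsOcc321 π t₂ ∧ t₁.2.1 ≠ t₂.2.1}
      = ballotZ 8 ((n : ℤ) - 4) + ballotZ 11 ((n : ℤ) - 6) := by
  have h1 : Nat.card {π : Equiv.Perm (Fin n) // occ321Count n π = 2 ∧
        ∃ t₁ t₂ : Fin n × Fin n × Fin n,
          IsOcc321 π t₁ ∧ IsOcc321 π t₂ ∧ t₁.2.1 ≠ t₂.2.1} = (twoOcc 0 n).ncard := by
    refine Nat.card_congr (((permFinEquiv n).subtypeEquiv fun π => twoOcc_iff π).trans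
      (Equiv.subtypeSubtypeEquivSubtype fun {σ} h => h.1))
  have h2 := ncard_twoOcc n
  rw [map_add, ← ballotZ_coeff 8 n 4, ← ballotZ_coeff 11 n 6] at h2
  rw [h1]
  exact_mod_cast h2
end

section
/- The number of permutations of [n] containing exactly two occurrences of the pattern 321 is 3·C^{(8)}_{n−4} + C^{(11)}_{n−6}, with the convention C^{(k)}_m = 0 for m < 0. -/
open PowerSeries

/-! ### The Catalan series and the generating functions -/

/-- The Catalan generating function `C`, with integer coefficients. -/
noncomputable def cat : ℤ⟦X⟧ := PowerSeries.map (Nat.castRingHom ℤ) catalanSeries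

theorem cat_eq : cat = 1 + X * cat ^ 2 := by
  have h := congrArg (PowerSeries.map (Nat.castRingHom ℤ)) catalanSeries_sq_mul_X_add_one
  simp only [map_add, map_mul, map_pow, map_one, PowerSeries.map_X] at h
  rw [cat]
  linear_combination -h

/-- The contribution to the generating function of one place where the value of the function equals
the remaining budget, when `a` is the number of zeros. -/
noncomputable def sB (a : ℕ) : ℤ⟦X⟧ := X * cat ^ (a + 1)

/-- The generating function for budget 1 from a state with `a` zeros and no ones. -/
noncomputable def sA (a : ℕ) : ℤ⟦X⟧ := X * cat ^ 3 * ((1 - X) * cat ^ a - 1)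

/-- For budget 2, the coefficient of `b (b + 1) / 2`, where `b` is the number of ones. -/
noncomputable def sR (a : ℕ) : ℤ⟦X⟧ := X ^ 2 * cat ^ (a + 2)

/-- For budget 2, the coefficient of `b`, where `b` is the number of ones. -/
noncomputable def sQ (a : ℕ) : ℤ⟦X⟧ := X ^ 2 * (1 - X) * cat ^ (a + 4)

/-- The part of `sP` independent of `a`. -/
noncomputable def be : ℤ⟦X⟧ := -2 * X * cat ^ 4 + 2 * X ^ 2 * cat ^ 4 - X ^ 2 * (1 - X) * cat ^ 6

/-- The part of `sP` linear in `a`. -/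
noncomputable def ga : ℤ⟦X⟧ := - X ^ 2 * cat ^ 4

/-- The coefficient of `C ^ a` in `sP`; its value is forced by the recurrence `idP` at `a = 2`. -/
noncomputable def al : ℤ⟦X⟧ := -(be + 2 * ga) + X * (2 * be + 5 * ga + sQ 2 + sR 2)

/-- The generating function for budget 2 from a state with `a` zeros, no ones and no twos. The
recurrence for `sP a - sP (a - 1)` is linear with inhomogeneity affine in `a`, which accounts for the
affine correction `be + a * ga` to the homogeneous solution `al * C ^ a`. -/
noncomputable def sP (a : ℕ) : ℤ⟦X⟧ := al * cat ^ a + be + (a : ℤ⟦X⟧) * ga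

/-- An identity of polynomials in `X` and `C` modulo `C = 1 + X C²`. -/
theorem sP_two : sP 2 = 3 * X ^ 3 * cat ^ 8 + X ^ 5 * cat ^ 11 := by
  have h := cat_eq
  simp only [sP, al, be, ga, sQ, sR]
  generalize cat = c at *
  generalize (X : ℤ⟦X⟧) = x at *
  grind

/-- The transition equation with budget 0. As in `idA` and `idP`, the number of zeros is `e + 2`. -/
theorem id0 (e : ℕ) : cat ^ (e + 2) =
    1 + X * (∑ i ∈ Finset.range e, cat ^ (i + 3) + cat ^ 2 + cat ^ (e + 3)) := by
  induction e with
  | zero => simp; linear_combination (cat + 1) * cat_eq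
  | succ e ih =>
    rw [Finset.sum_range_succ]
    linear_combination ih + cat ^ (e + 2) * cat_eq

theorem idB (e : ℕ) : sB e = X * (sB (e + 1) + cat ^ e) := by
  simp only [sB]; linear_combination X * cat ^ e * cat_eq

theorem idA (e : ℕ) : sA (e + 2) = X * (∑ i ∈ Finset.range e, sA (i + 3)
    + (sA 2 + ((e : ℤ⟦X⟧) + 1) * sB 2) + sA (e + 3)) := by
  induction e with
  | zero =>
    have h := cat_eq
    simp only [sA, sB, Finset.sum_range_zero, Nat.cast_zero]
    generalize cat = c at *
    generalize (X : ℤ⟦X⟧) = x at *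
    grind
  | succ e ih =>
    rw [Finset.sum_range_succ]
    simp only [sA, sB] at ih ⊢
    push_cast
    linear_combination ih + cat ^ (e + 2) * ((1-X)* X * cat^3) * cat_eq

theorem idR (e : ℕ) : sR e = X * (sR (e + 1) + sB e) := by
  simp only [sR, sB]; linear_combination X ^ 2 * cat ^ (e + 1) * cat_eq

theorem idQ (e : ℕ) : sQ e = X * (sQ (e + 1) + sB 2 + sA e) := by
  simp only [sQ, sB, sA]; linear_combination X ^ 2 * (1 - X) * cat ^ (e + 3) * cat_eq

theorem idP (e : ℕ) : sP (e + 2) = X * (∑ i ∈ Finset.range e, sP (i + 3) + (e : ℤ⟦X⟧) * sB 3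
    + (sP 2 + ((e : ℤ⟦X⟧) + 1) * sQ 2 + ((e + 2).choose 2 : ℤ⟦X⟧) * sR 2) + sP (e + 3)) := by
  induction e with
  | zero =>
    have h := cat_eq
    simp only [sP, al, be, ga, sQ, sR, sB, Finset.sum_range_zero, Nat.cast_zero, zero_add, Nat.choose_self]
    push_cast
    generalize cat = c at *
    generalize (X : ℤ⟦X⟧) = x at *
    grind
  | succ e ih =>
    rw [Finset.sum_range_succ, Nat.choose_succ_succ' (e + 2), Nat.choose_one_right]
    simp only [sP, be, ga, sQ, sR, sB] at ih ⊢
    push_cast at ih ⊢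
    linear_combination ih + cat ^ (e + 2) * al * cat_eq

/-! ### Coefficients of powers of the Catalan series -/

theorem constCoeff_cat : constantCoeff cat = 1 := by
  simp [cat, catalanSeries, ← coeff_zero_eq_constantCoeff_apply]

/-- The recurrence of ballot numbers that matches `C ^ (k + 1) = C ^ k + X C ^ (k + 2)`. -/
theorem ballot_succ (k n : ℕ) : (ballot (k+1) (n+1) : ℤ) = ballot k (n+1) + ballot (k+2) n := by
  -- so that the truncated subtraction in `ballot` is a true one
  have hle : ∀ k m, Nat.choose (2 * (m+1) + k - 1) m ≤ Nat.choose (2 * (m+1) + k - 1) (m+1) := by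
    intro k m
    obtain _ | k := k
    · have : 2 * (m+1) + 0 - 1 = 2 * m + 1 := by omega
      rw [this, Nat.choose_symm_half]
    · exact Nat.choose_le_succ_of_lt_half_left (by omega)
  have h1 : ∀ k m, (ballot k (m + 1) : ℤ) =
      Nat.choose (2 * (m+1) + k - 1) (m+1) - Nat.choose (2 * (m+1) + k - 1) m := by
    intro k m
    simp only [ballot, Nat.add_eq_zero_iff, one_ne_zero, and_false, if_false, Nat.add_sub_cancel]
    exact Nat.cast_sub (hle k m)
  rw [h1, h1]
  have e1 : 2 * (n + 1) + (k + 1) - 1 = (2 * n + k + 1) + 1 := by omega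
  have e2 : 2 * (n + 1) + k - 1 = 2 * n + k + 1 := by omega
  rw [e1, e2]
  obtain _ | n := n
  · simp [ballot]
  · rw [h1]
    have e3 : 2 * (n + 1) + (k + 2) - 1 = 2 * (n + 1) + k + 1 := by omega
    rw [e3, Nat.choose_succ_succ' (2 * (n + 1) + k + 1) (n + 1),
      Nat.choose_succ_succ' (2 * (n + 1) + k + 1) n]
    push_cast; ring

theorem coeff_cat (n k : ℕ) : coeff n (cat ^ k) = (ballot k n : ℤ) := by
  induction n generalizing k with
  | zero => simp [ballot, constCoeff_cat]
  | succ n ih =>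
    induction k with
    | zero =>
      simp [ballot, coeff_one, Nat.choose_symm_half, show 2 * (n + 1) - 1 = 2 * n + 1 by omega]
    | succ k ihk =>
      have : cat ^ (k + 1) = cat ^ k + X * cat ^ (k + 2) := by linear_combination cat ^ k * cat_eq
      rw [this, map_add, coeff_succ_X_mul, ihk, ih, ballot_succ]

/-! ### The process on functions -/

/-- The effect on `invBelow` of prepending a letter of value `p`. -/
def step (f : ℕ → ℕ) (p q : ℕ) : ℕ := if q ≤ p then f q else p + f (q - 1)

/-- The number of ways to prepend `m` more letters to a permutation of `n` letters whose `invBelow`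
is `f`, creating exactly `k` further occurrences of 321. -/
def cnt : ℕ → ℕ → (ℕ → ℕ) → ℕ → ℕ
  | 0, _, _, k => if k = 0 then 1 else 0
  | m + 1, n, f, k => ∑ p ∈ Finset.range (n + 1),
      if f p ≤ k then cnt m (n + 1) (step f p) (k - f p) else 0

/-- On `[0, n]`, the function `f` vanishes at the first `a` places and is at least 1 afterwards. -/
def Prof0 (n a : ℕ) (f : ℕ → ℕ) : Prop :=
  a ≤ n + 1 ∧ (∀ q, q < a → f q = 0) ∧ ∀ q, a ≤ q → q ≤ n → 1 ≤ f q

/-- On `[0, n]`, the function `f` takes the value 0 at the first `a` places, 1 at the next `b`, and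
is at least 2 afterwards. -/
def Prof1 (n a b : ℕ) (f : ℕ → ℕ) : Prop :=
  a + b ≤ n + 1 ∧ (∀ q, q < a → f q = 0) ∧ (∀ q, a ≤ q → q < a + b → f q = 1) ∧
    ∀ q, a + b ≤ q → q ≤ n → 2 ≤ f q

/-- On `[0, n]`, the function `f` takes the value 0 at the first `a` places, 1 at the next `b`, 2 at
the next `c`, and is at least 3 afterwards. -/
def Prof2 (n a b c : ℕ) (f : ℕ → ℕ) : Prop :=
  a + b + c ≤ n + 1 ∧ (∀ q, q < a → f q = 0) ∧ (∀ q, a ≤ q → q < a + b → f q = 1) ∧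
    (∀ q, a + b ≤ q → q < a + b + c → f q = 2) ∧ ∀ q, a + b + c ≤ q → q ≤ n → 3 ≤ f q

theorem step_le {f : ℕ → ℕ} {p q : ℕ} (h : q ≤ p) : step f p q = f q := by simp [step, h]

theorem step_gt {f : ℕ → ℕ} {p q : ℕ} (h : p < q) : step f p q = p + f (q - 1) := by
  simp [step, Nat.not_le.mpr h]

theorem Prof0.step_zero {n e : ℕ} {f : ℕ → ℕ} (h : Prof0 n (e + 2) f) :
    Prof0 (n + 1) (e + 3) (step f 0) := by
  obtain ⟨h1, h2, h3⟩ := h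
  refine ⟨by omega, fun q hq => ?_, fun q hq hq' => ?_⟩
  · obtain hp | hp := Nat.lt_or_ge 0 q
    · rw [step_gt hp, h2 _ (by omega)]
    · rw [step_le hp, h2 _ (by omega)]
  · rw [step_gt (by omega)]
    have := h3 (q - 1) (by omega) (by omega)
    omega

theorem Prof0.step_lt {n e p : ℕ} {f : ℕ → ℕ} (h : Prof0 n (e + 2) f) (hp : p < e + 1) :
    Prof0 (n + 1) (p + 2) (step f (p + 1)) := by
  obtain ⟨h1, h2, h3⟩ := h
  refine ⟨by omega, fun q hq => ?_, fun q hq hq' => ?_⟩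
  · rw [step_le (by omega), h2 _ (by omega)]
  · rw [step_gt (by omega)]
    omega

theorem Prof1.step_zero {n e b : ℕ} {f : ℕ → ℕ} (h : Prof1 n (e + 2) b f) :
    Prof1 (n + 1) (e + 3) b (step f 0) := by
  obtain ⟨h1, h2, h3, h4⟩ := h
  refine ⟨by omega, fun q hq => ?_, fun q hq hq' => ?_, fun q hq hq' => ?_⟩
  · obtain hp | hp := Nat.lt_or_ge 0 q
    · rw [step_gt hp, h2 _ (by omega)]
    · rw [step_le hp, h2 _ (by omega)]
  · rw [step_gt (by omega), h3 _ (by omega) (by omega)]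
  · rw [step_gt (by omega)]
    have := h4 (q - 1) (by omega) (by omega)
    omega

theorem Prof1.step_one {n e b : ℕ} {f : ℕ → ℕ} (h : Prof1 n (e + 2) b f) :
    Prof1 (n + 1) 2 (e + 1) (step f 1) := by
  obtain ⟨h1, h2, h3, h4⟩ := h
  refine ⟨by omega, fun q hq => ?_, fun q hq hq' => ?_, fun q hq hq' => ?_⟩
  · rw [step_le (by omega), h2 _ (by omega)]
  · rw [step_gt (by omega), h2 _ (by omega)]
  · rw [step_gt (by omega)]
    have h5 := h3 (q - 1) (by omega)
    have h6 := h4 (q - 1)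
    omega

theorem Prof1.step_lt {n e b p : ℕ} {f : ℕ → ℕ} (h : Prof1 n (e + 2) b f) (hp : p < e) :
    Prof1 (n + 1) (p + 3) 0 (step f (p + 2)) := by
  obtain ⟨h1, h2, h3, h4⟩ := h
  refine ⟨by omega, fun q hq => ?_, fun q hq hq' => by omega, fun q hq hq' => ?_⟩
  · rw [step_le (by omega), h2 _ (by omega)]
  · rw [step_gt (by omega)]
    omega

/-- A choice that spends the only occurrence of the budget. -/
theorem Prof1.step_mid {n e b p : ℕ} {f : ℕ → ℕ} (h : Prof1 n (e + 2) b f) (hp : p < b) :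
    Prof0 (n + 1) (e + 2) (step f (e + 2 + p)) := by
  obtain ⟨h1, h2, h3, h4⟩ := h
  refine ⟨by omega, fun q hq => ?_, fun q hq hq' => ?_⟩
  · rw [step_le (by omega), h2 _ (by omega)]
  · obtain hp | hp := Nat.lt_or_ge (e + 2 + p) q
    · rw [step_gt hp]; omega
    · rw [step_le hp, h3 _ (by omega) (by omega)]

theorem Prof2.step_zero {n e b c : ℕ} {f : ℕ → ℕ} (h : Prof2 n (e + 2) b c f) :
    Prof2 (n + 1) (e + 3) b c (step f 0) := by
  obtain ⟨h1, h2, h3, h4, h5⟩ := h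
  refine ⟨by omega, fun q hq => ?_, fun q hq hq' => ?_, fun q hq hq' => ?_, fun q hq hq' => ?_⟩
  · obtain hp | hp := Nat.lt_or_ge 0 q
    · rw [step_gt hp, h2 _ (by omega)]
    · rw [step_le hp, h2 _ (by omega)]
  · rw [step_gt (by omega), h3 _ (by omega) (by omega)]
  · rw [step_gt (by omega), h4 _ (by omega) (by omega)]
  · rw [step_gt (by omega)]
    have := h5 (q - 1) (by omega) (by omega)
    omega

theorem Prof2.step_one {n e b c : ℕ} {f : ℕ → ℕ} (h : Prof2 n (e + 2) b c f) :
    Prof2 (n + 1) 2 (e + 1) b (step f 1) := by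
  obtain ⟨h1, h2, h3, h4, h5⟩ := h
  refine ⟨by omega, fun q hq => ?_, fun q hq hq' => ?_, fun q hq hq' => ?_, fun q hq hq' => ?_⟩
  · rw [step_le (by omega), h2 _ (by omega)]
  · rw [step_gt (by omega), h2 _ (by omega)]
  · rw [step_gt (by omega), h3 _ (by omega) (by omega)]
  · rw [step_gt (by omega)]
    have h6 := h4 (q - 1) (by omega)
    have h7 := h5 (q - 1)
    omega

theorem Prof2.step_lt {n e b c p : ℕ} {f : ℕ → ℕ} (h : Prof2 n (e + 2) b c f) (hp : p < e) :
    Prof2 (n + 1) (p + 3) 0 (if p = 0 then e else 0) (step f (p + 2)) := by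
  obtain ⟨h1, h2, h3, h4, h5⟩ := h
  refine ⟨by split_ifs <;> omega, fun q hq => ?_, fun q hq hq' => by omega,
    fun q hq hq' => ?_, fun q hq hq' => ?_⟩
  · rw [step_le (by omega), h2 _ (by omega)]
  · split_ifs at hq' with h0
    · rw [step_gt (by omega), h2 _ (by omega)]; omega
    · omega
  · rw [step_gt (by omega)]
    have h6 := h3 (q - 1)
    have h7 := h4 (q - 1)
    have h8 := h5 (q - 1)
    split_ifs at hq <;> omega

/-- A choice that spends one of two occurrences; only budget 1 matters afterwards. -/
theorem Prof2.step_mid {n e b c p : ℕ} {f : ℕ → ℕ} (h : Prof2 n (e + 2) b c f) (hp : p < b) :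
    Prof1 (n + 1) (e + 2) (p + 1) (step f (e + 2 + p)) := by
  obtain ⟨h1, h2, h3, h4, h5⟩ := h
  refine ⟨by omega, fun q hq => ?_, fun q hq hq' => ?_, fun q hq hq' => ?_⟩
  · rw [step_le (by omega), h2 _ (by omega)]
  · rw [step_le (by omega), h3 _ (by omega) (by omega)]
  · rw [step_gt (by omega)]; omega

/-- A choice that spends both occurrences. -/
theorem Prof2.step_high {n e b c p : ℕ} {f : ℕ → ℕ} (h : Prof2 n (e + 2) b c f) (hp : p < c) :
    Prof0 (n + 1) (e + 2) (step f (e + 2 + b + p)) := by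
  obtain ⟨h1, h2, h3, h4, h5⟩ := h
  refine ⟨by omega, fun q hq => ?_, fun q hq hq' => ?_⟩
  · rw [step_le (by omega), h2 _ (by omega)]
  · obtain hp | hp := Nat.lt_or_ge (e + 2 + b + p) q
    · rw [step_gt hp]; omega
    · rw [step_le hp]
      have h6 := h3 q (by omega)
      have h7 := h4 q
      omega

/-! ### Solving the recurrences -/

/-- In the proof, `F p` is the contribution of the choice `p`, and the range of `p` is split
according to the value of `f p`; likewise in `cnt_one_eq` and `cnt_two_eq`. -/
theorem cnt_zero_eq (m : ℕ) : ∀ (n e : ℕ) (f : ℕ → ℕ), Prof0 n (e + 2) f →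
    (cnt m n f 0 : ℤ) = coeff m (cat ^ (e + 2)) := by
  induction m with
  | zero => intro n e f _; simp [cnt, constCoeff_cat]
  | succ m ih =>
    intro n e f h
    have ⟨h1, h2, h3⟩ := h
    obtain ⟨r, hr⟩ := Nat.exists_eq_add_of_le h1
    obtain ⟨F, hF⟩ : ∃ F : ℕ → ℤ, ∀ p, F p =
      ((if f p ≤ 0 then cnt m (n + 1) (step f p) (0 - f p) else 0 : ℕ) : ℤ) := ⟨_, fun _ => rfl⟩
    have hcnt : (cnt (m + 1) n f 0 : ℤ) = ∑ p ∈ Finset.range (n + 1), F p := by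
      simp only [cnt, hF, Nat.cast_sum]
    have f0 : F 0 = coeff m (cat ^ (e + 3)) := by
      rw [hF, h2 0 (by omega), if_pos le_rfl, Nat.sub_zero, ih _ (e + 1) _ h.step_zero]
    have f1 : F (0 + 1) = coeff m (cat ^ 2) := by
      rw [hF, h2 _ (by omega), if_pos le_rfl, Nat.sub_zero,
        ih _ 0 _ (h.step_lt (p := 0) (by omega))]
    have flo : ∀ x ∈ Finset.range e, F (x + 1 + 1) = coeff m (cat ^ (x + 3)) := by
      intro x hx
      rw [Finset.mem_range] at hx
      rw [hF, h2 _ (by omega), if_pos le_rfl, Nat.sub_zero,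
        ih _ (x + 1) _ (h.step_lt (p := x + 1) (by omega))]
    have ftop : ∀ x ∈ Finset.range r, F (e + 2 + x) = 0 := by
      intro x hx
      rw [Finset.mem_range] at hx
      have := h3 (e + 2 + x) (by omega) (by omega)
      rw [hF, if_neg (by omega), Nat.cast_zero]
    rw [hcnt, hr, Finset.sum_range_add, Finset.sum_range_succ', Finset.sum_range_succ',
      f0, f1, Finset.sum_congr rfl flo, Finset.sum_eq_zero ftop, id0 e]
    simp [coeff_succ_X_mul, coeff_one]

theorem cnt_one_eq (m : ℕ) : ∀ (n e b : ℕ) (f : ℕ → ℕ), Prof1 n (e + 2) b f →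
    (cnt m n f 1 : ℤ) = coeff m (sA (e + 2) + (b : ℤ⟦X⟧) * sB (e + 2)) := by
  induction m with
  | zero => intro n e b f _; simp [cnt, sA, sB]
  | succ m ih =>
    intro n e b f h
    have ⟨h1, h2, h3, h4⟩ := h
    obtain ⟨r, hr⟩ := Nat.exists_eq_add_of_le h1
    have key : sA (e + 2) + (b : ℤ⟦X⟧) * sB (e + 2) = X * (∑ i ∈ Finset.range e, sA (i + 3)
        + (sA 2 + ((e + 1 : ℕ) : ℤ⟦X⟧) * sB 2) + (sA (e + 3) + (b : ℤ⟦X⟧) * sB (e + 3))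
        + ∑ _i ∈ Finset.range b, cat ^ (e + 2)) := by
      rw [Finset.sum_const, Finset.card_range, nsmul_eq_mul]
      push_cast
      linear_combination idA e + (b : ℤ⟦X⟧) * idB (e + 2)
    obtain ⟨F, hF⟩ : ∃ F : ℕ → ℤ, ∀ p, F p =
      ((if f p ≤ 1 then cnt m (n + 1) (step f p) (1 - f p) else 0 : ℕ) : ℤ) := ⟨_, fun _ => rfl⟩
    have hcnt : (cnt (m + 1) n f 1 : ℤ) = ∑ p ∈ Finset.range (n + 1), F p := by
      simp only [cnt, hF, Nat.cast_sum]
    have f0 : F 0 = coeff m (sA (e + 3) + (b : ℤ⟦X⟧) * sB (e + 3)) := by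
      rw [hF, h2 0 (by omega), if_pos zero_le_one, Nat.sub_zero, ih _ (e + 1) _ _ h.step_zero]
    have f1 : F (0 + 1) = coeff m (sA 2 + ((e + 1 : ℕ) : ℤ⟦X⟧) * sB 2) := by
      rw [hF, h2 _ (by omega), if_pos zero_le_one, Nat.sub_zero, ih _ 0 _ _ h.step_one]
    have flo : ∀ x ∈ Finset.range e, F (x + 1 + 1) = coeff m (sA (x + 3)) := by
      intro x hx
      rw [Finset.mem_range] at hx
      rw [hF, h2 _ (by omega), if_pos zero_le_one, Nat.sub_zero, ih _ (x + 1) _ _ (h.step_lt hx),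
        Nat.cast_zero, zero_mul, add_zero]
    have fmid : ∀ x ∈ Finset.range b, F (e + 2 + x) = coeff m (cat ^ (e + 2)) := by
      intro x hx
      rw [Finset.mem_range] at hx
      rw [hF, h3 _ (by omega) (by omega), if_pos le_rfl, Nat.sub_self,
        cnt_zero_eq m _ e _ (h.step_mid hx)]
    have ftop : ∀ x ∈ Finset.range r, F (e + 2 + b + x) = 0 := by
      intro x hx
      rw [Finset.mem_range] at hx
      have := h4 (e + 2 + b + x) (by omega) (by omega)
      rw [hF, if_neg (by omega), Nat.cast_zero]
    rw [hcnt, hr, Finset.sum_range_add, Finset.sum_range_add, Finset.sum_range_succ',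
      Finset.sum_range_succ', f0, f1, Finset.sum_congr rfl flo, Finset.sum_congr rfl fmid,
      Finset.sum_eq_zero ftop, key, coeff_succ_X_mul]
    simp only [map_add, map_sum, add_zero]

theorem cnt_two_eq (m : ℕ) : ∀ (n e b c : ℕ) (f : ℕ → ℕ), Prof2 n (e + 2) b c f →
    (cnt m n f 2 : ℤ) = coeff m (sP (e + 2) + (b : ℤ⟦X⟧) * sQ (e + 2)
      + ((b + 1).choose 2 : ℤ⟦X⟧) * sR (e + 2) + (c : ℤ⟦X⟧) * sB (e + 2)) := by
  induction m with
  | zero => intro n e b c f _; simp [cnt, sP, sQ, sR, sB, al, be, ga]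
  | succ m ih =>
    intro n e b c f h
    have ⟨h1, h2, h3, h4, h5⟩ := h
    obtain ⟨r, hr⟩ := Nat.exists_eq_add_of_le h1
    have tri : (∑ i ∈ Finset.range b, ((i + 1 : ℕ) : ℤ⟦X⟧)) = ((b + 1).choose 2 : ℤ⟦X⟧) := by
      clear * -
      induction b with
      | zero => simp
      | succ b ihb =>
        rw [Finset.sum_range_succ, ihb, Nat.choose_succ_succ' (b + 1), Nat.choose_one_right]
        push_cast; ring
    have hs : ∑ i ∈ Finset.range e,
        (sP (i + 3) + ((if i = 0 then e else 0 : ℕ) : ℤ⟦X⟧) * sB (i + 3))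
        = ∑ i ∈ Finset.range e, sP (i + 3) + (e : ℤ⟦X⟧) * sB 3 := by
      rw [Finset.sum_add_distrib]
      congr 1
      obtain _ | e := e
      · simp
      · rw [Finset.sum_range_succ']; simp
    have key : sP (e + 2) + (b : ℤ⟦X⟧) * sQ (e + 2)
          + ((b + 1).choose 2 : ℤ⟦X⟧) * sR (e + 2) + (c : ℤ⟦X⟧) * sB (e + 2)
        = X * (∑ i ∈ Finset.range e,
            (sP (i + 3) + ((if i = 0 then e else 0 : ℕ) : ℤ⟦X⟧) * sB (i + 3))
          + (sP 2 + ((e + 1 : ℕ) : ℤ⟦X⟧) * sQ 2 + ((e + 2).choose 2 : ℤ⟦X⟧) * sR 2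
            + (b : ℤ⟦X⟧) * sB 2)
          + (sP (e + 3) + (b : ℤ⟦X⟧) * sQ (e + 3)
            + ((b + 1).choose 2 : ℤ⟦X⟧) * sR (e + 3) + (c : ℤ⟦X⟧) * sB (e + 3))
          + ∑ i ∈ Finset.range b, (sA (e + 2) + ((i + 1 : ℕ) : ℤ⟦X⟧) * sB (e + 2))
          + ∑ _i ∈ Finset.range c, cat ^ (e + 2)) := by
      rw [hs, Finset.sum_add_distrib, ← Finset.sum_mul, tri, Finset.sum_const, Finset.card_range,
        nsmul_eq_mul, Finset.sum_const, Finset.card_range, nsmul_eq_mul]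
      push_cast
      linear_combination idP e + (b : ℤ⟦X⟧) * idQ (e + 2)
        + ((b + 1).choose 2 : ℤ⟦X⟧) * idR (e + 2) + (c : ℤ⟦X⟧) * idB (e + 2)
    obtain ⟨F, hF⟩ : ∃ F : ℕ → ℤ, ∀ p, F p =
      ((if f p ≤ 2 then cnt m (n + 1) (step f p) (2 - f p) else 0 : ℕ) : ℤ) := ⟨_, fun _ => rfl⟩
    have hcnt : (cnt (m + 1) n f 2 : ℤ) = ∑ p ∈ Finset.range (n + 1), F p := by
      simp only [cnt, hF, Nat.cast_sum]
    have f0 : F 0 = coeff m (sP (e + 3) + (b : ℤ⟦X⟧) * sQ (e + 3)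
        + ((b + 1).choose 2 : ℤ⟦X⟧) * sR (e + 3) + (c : ℤ⟦X⟧) * sB (e + 3)) := by
      rw [hF, h2 0 (by omega), if_pos zero_le_two, Nat.sub_zero, ih _ (e + 1) _ _ _ h.step_zero]
    have f1 : F (0 + 1) = coeff m (sP 2 + ((e + 1 : ℕ) : ℤ⟦X⟧) * sQ 2
        + ((e + 2).choose 2 : ℤ⟦X⟧) * sR 2 + (b : ℤ⟦X⟧) * sB 2) := by
      rw [hF, h2 _ (by omega), if_pos zero_le_two, Nat.sub_zero, ih _ 0 _ _ _ h.step_one]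
    have flo : ∀ x ∈ Finset.range e, F (x + 1 + 1) =
        coeff m (sP (x + 3) + ((if x = 0 then e else 0 : ℕ) : ℤ⟦X⟧) * sB (x + 3)) := by
      intro x hx
      rw [Finset.mem_range] at hx
      rw [hF, h2 _ (by omega), if_pos zero_le_two, Nat.sub_zero,
        ih _ (x + 1) _ _ _ (h.step_lt hx)]
      simp
    have fmid : ∀ x ∈ Finset.range b, F (e + 2 + x) =
        coeff m (sA (e + 2) + ((x + 1 : ℕ) : ℤ⟦X⟧) * sB (e + 2)) := by
      intro x hx
      rw [Finset.mem_range] at hx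
      rw [hF, h3 _ (by omega) (by omega), if_pos one_le_two,
        cnt_one_eq m _ e _ _ (h.step_mid hx)]
    have fhigh : ∀ x ∈ Finset.range c, F (e + 2 + b + x) = coeff m (cat ^ (e + 2)) := by
      intro x hx
      rw [Finset.mem_range] at hx
      rw [hF, h4 _ (by omega) (by omega), if_pos le_rfl, Nat.sub_self,
        cnt_zero_eq m _ e _ (h.step_high hx)]
    have ftop : ∀ x ∈ Finset.range r, F (e + 2 + b + c + x) = 0 := by
      intro x hx
      rw [Finset.mem_range] at hx
      have := h5 (e + 2 + b + c + x) (by omega) (by omega)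
      rw [hF, if_neg (by omega), Nat.cast_zero]
    rw [hcnt, hr, Finset.sum_range_add, Finset.sum_range_add, Finset.sum_range_add,
      Finset.sum_range_succ', Finset.sum_range_succ', f0, f1, Finset.sum_congr rfl flo,
      Finset.sum_congr rfl fmid, Finset.sum_congr rfl fhigh, Finset.sum_eq_zero ftop, key,
      coeff_succ_X_mul]
    simp only [map_add, map_sum, add_zero]

/-! ### Growing permutations by a first letter -/

/-- The permutation with first letter `p` whose other letters are in the same relative order as
those of `τ`. -/
def ins {n : ℕ} (p : Fin (n + 1)) (τ : Equiv.Perm (Fin n)) : Equiv.Perm (Fin (n + 1)) :=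
  (finSuccEquiv' 0).trans ((Equiv.optionCongr τ).trans (finSuccEquiv' p).symm)

theorem ins_zero {n : ℕ} (p : Fin (n + 1)) (τ : Equiv.Perm (Fin n)) : ins p τ 0 = p := by
  simp [ins]

theorem ins_succ {n : ℕ} (p : Fin (n + 1)) (τ : Equiv.Perm (Fin n)) (i : Fin n) :
    ins p τ i.succ = p.succAbove (τ i) := by
  have h : finSuccEquiv' 0 i.succ = some i := by
    rw [← Fin.succAbove_zero, finSuccEquiv'_succAbove]
  simp [ins, h]

theorem ins_bijective (n : ℕ) :
    Function.Bijective fun x : Fin (n + 1) × Equiv.Perm (Fin n) => ins x.1 x.2 := by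
  rw [Fintype.bijective_iff_injective_and_card]
  constructor
  · rintro ⟨p, τ⟩ ⟨p', τ'⟩ h
    have h0 : ∀ i, ins p τ i = ins p' τ' i := fun i => by rw [show ins p τ = ins p' τ' from h]
    have hp : p = p' := by simpa [ins_zero] using h0 0
    subst hp
    refine Prod.ext rfl (Equiv.ext fun i => ?_)
    simpa [ins_succ] using h0 i.succ
  · simp [Fintype.card_perm, Nat.factorial_succ]

/-- The number of occurrences of 321, as a sum of indicators. -/
def occ {n : ℕ} (σ : Equiv.Perm (Fin n)) : ℕ :=
  ∑ i, ∑ j, ∑ k, if i < j ∧ j < k ∧ σ k < σ j ∧ σ j < σ i then 1 else 0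

/-- The number of inversions of `σ` whose larger entry is less than `q`. -/
def invBelow {n : ℕ} (σ : Equiv.Perm (Fin n)) (q : ℕ) : ℕ :=
  ∑ i, ∑ j, if i < j ∧ σ j < σ i ∧ (σ i : ℕ) < q then 1 else 0

theorem occ321Count_eq {n : ℕ} (σ : Equiv.Perm (Fin n)) : occ321Count n σ = occ σ := by
  classical
  rw [occ321Count, Nat.card_eq_fintype_card, Fintype.card_subtype, Finset.card_filter,
    Fintype.sum_prod_type, occ]
  simp only [Fintype.sum_prod_type, IsOcc321]
  refine Finset.sum_congr rfl fun i _ => Finset.sum_congr rfl fun j _ =>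
    Finset.sum_congr rfl fun k _ => ?_
  -- the two sides differ only in the decidability instance
  split_ifs with h
  · exact if_pos h
  · exact if_neg h

/-- The case `q = 0` falls under `q ≤ p`, so `q - 1` is never truncated where it is used. -/
theorem succAbove_val_lt {n : ℕ} (p : Fin (n + 1)) (x : Fin n) (q : ℕ) :
    (p.succAbove x : ℕ) < q ↔ (if q ≤ p then (x : ℕ) < q else (x : ℕ) < q - 1) := by
  have := p.isLt
  simp only [Fin.succAbove, Fin.lt_def]
  split_ifs <;> simp at * <;> omega

/-- For `p < q` the new first letter is the larger entry of `p` inversions, one for each smaller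
letter. -/
theorem invBelow_ins {n : ℕ} (p : Fin (n + 1)) (τ : Equiv.Perm (Fin n)) :
    invBelow (ins p τ) = step (invBelow τ) p := by
  funext q
  have hp : ∑ j, (if ((τ j : Fin n) : ℕ) < p then 1 else 0) = (p : ℕ) := by
    rw [Equiv.sum_comp τ (fun x : Fin n => if (x : ℕ) < p then 1 else 0),
      Fin.sum_univ_eq_sum_range (fun x => if x < (p : ℕ) then 1 else 0), Finset.sum_ite,
      Finset.sum_const_zero, add_zero, ← Finset.card_eq_sum_ones]
    have : (Finset.range n).filter (· < (p : ℕ)) = Finset.range p := by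
      ext x; simp; omega
    rw [this, Finset.card_range]
  rw [invBelow, Fin.sum_univ_succ]
  simp only [Fin.sum_univ_succ, ins_zero, ins_succ, Fin.succ_lt_succ_iff, Fin.succ_pos,
    Fin.not_lt_zero, Fin.succAbove_lt_succAbove_iff, succAbove_val_lt,
    Fin.succAbove_lt_iff_castSucc_lt, lt_irrefl, false_and, true_and, if_false, zero_add, step]
  obtain hq | hq := Nat.lt_or_ge (p : ℕ) q
  · simp only [hq, Nat.not_le.mpr hq, if_false, and_true, invBelow]
    congr 1
  · simp only [hq, Nat.not_lt.mpr hq, if_true, and_false, if_false, Finset.sum_const_zero, zero_add,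
      invBelow]

theorem occ_ins {n : ℕ} (p : Fin (n + 1)) (τ : Equiv.Perm (Fin n)) :
    occ (ins p τ) = invBelow τ p + occ τ := by
  rw [occ, Fin.sum_univ_succ]
  simp only [Fin.sum_univ_succ, ins_zero, ins_succ, Fin.succ_lt_succ_iff, Fin.succ_pos,
    Fin.not_lt_zero, Fin.succAbove_lt_succAbove_iff, Fin.succAbove_lt_iff_castSucc_lt, lt_irrefl,
    false_and, and_false, true_and, if_false, zero_add, Finset.sum_const_zero, occ, invBelow]
  rfl

/-- The number of permutations of `n + m` letters with exactly `k` occurrences of 321, organised by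
the pattern `σ` of their last `n` letters; by `total_succ` it depends on `n + m` only. -/
def total (k m n : ℕ) : ℕ := ∑ σ : Equiv.Perm (Fin n),
  if occ σ ≤ k then cnt m n (invBelow σ) (k - occ σ) else 0

theorem total_succ (k m n : ℕ) : total k (m + 1) n = total k m (n + 1) := by
  rw [total, total, ← (ins_bijective n).sum_comp, Fintype.sum_prod_type_right]
  refine Finset.sum_congr rfl fun τ _ => ?_
  simp only [occ_ins, invBelow_ins, cnt]
  rw [← Fin.sum_univ_eq_sum_range (fun p => if invBelow τ p ≤ k - occ τ then
    cnt m (n + 1) (step (invBelow τ) p) (k - occ τ - invBelow τ p) else 0)]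
  split_ifs with h
  · refine Finset.sum_congr rfl fun p _ => ?_
    rw [Nat.sub_sub, Nat.add_comm (occ τ)]
    congr 1
    rw [eq_iff_iff]; omega
  · refine (Finset.sum_eq_zero fun p _ => ?_).symm
    rw [if_neg (by omega)]

theorem card_occ_eq_cnt (k n : ℕ) :
    Nat.card {π : Equiv.Perm (Fin n) // occ321Count n π = k} = cnt n 0 (fun _ => 0) k := by
  have h1 : ∀ m j, total k m j = total k 0 (m + j) := by
    intro m
    induction m with
    | zero => simp
    | succ m ih => intro j; rw [total_succ, ih]; congr 1; omega
  have h2 : total k n 0 = cnt n 0 (fun _ => 0) k := by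
    have : ∀ σ : Equiv.Perm (Fin 0), invBelow σ = fun _ => 0 := fun σ => by
      funext q; simp [invBelow]
    simp [total, occ, this]
  rw [← h2, h1, Nat.add_zero, total, Nat.card_eq_fintype_card, Fintype.card_subtype,
    Finset.card_filter]
  refine Finset.sum_congr rfl fun σ _ => ?_
  rw [occ321Count_eq, cnt, ← ite_and]
  congr 1
  rw [eq_iff_iff]; omega

/-- The number of permutations of `[n]` containing exactly two occurrences of the
pattern 321 is `3·C^{(8)}_{n-4} + C^{(11)}_{n-6}`, with `C^{(k)}_m = 0` for `m < 0`. -/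
theorem two321_count (n : ℕ) :
    Nat.card {π : Equiv.Perm (Fin n) // occ321Count n π = 2}
      = 3 * ballotZ 8 ((n : ℤ) - 4) + ballotZ 11 ((n : ℤ) - 6) := by
  rw [card_occ_eq_cnt]
  obtain _ | m := n
  · simp [cnt, ballotZ]
  have hp : Prof2 1 (0 + 2) 0 0 (step (fun _ => 0) 0) :=
    ⟨by omega, fun q _ => by simp [step], fun q _ _ => by omega, fun q _ _ => by omega,
      fun q _ _ => by omega⟩
  have hc := cnt_two_eq m _ _ _ _ _ hp
  have h0 : cnt (m + 1) 0 (fun _ => 0) 2 = cnt m 1 (step (fun _ => 0) 0) 2 := by simp [cnt]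
  -- the first letter has been placed, which accounts for `m + 1 - (d + 1) = m - d`
  have hz : ∀ k d : ℕ, coeff m (X ^ d * cat ^ k) =
      (ballotZ k (((m + 1 : ℕ) : ℤ) - (d + 1 : ℕ)) : ℤ) := by
    intro k d
    rw [coeff_X_pow_mul', ballotZ]
    by_cases hd : d ≤ m
    · rw [if_pos hd, if_pos (by omega), coeff_cat]
      congr 2; omega
    · rw [if_neg hd, if_neg (by omega)]; rfl
  have h3 : (3 : ℤ⟦X⟧) * X ^ 3 * cat ^ 8 = (3 : ℤ) • (X ^ 3 * cat ^ 8) := by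
    rw [zsmul_eq_mul]; push_cast; ring
  zify
  rw [h0, hc]
  have hs : sP (0 + 2) + ((0 : ℕ) : ℤ⟦X⟧) * sQ (0 + 2) + ((0 + 1).choose 2 : ℤ⟦X⟧) * sR (0 + 2)
      + ((0 : ℕ) : ℤ⟦X⟧) * sB (0 + 2) = (3 : ℤ) • (X ^ 3 * cat ^ 8) + X ^ 5 * cat ^ 11 := by
    rw [← h3, ← sP_two]
    simp
  rw [hs, map_add, map_smul, hz, hz, smul_eq_mul]
  norm_num
end
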